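/- arXiv:1101.1760 — 2 statements merged into one kernel-verified Lean document; each statement's English description precedes it below -/
import Mathlib

section
/- Lemma 5.3 (upper bound in the inactive regime). For the FA-1f model with two empty boundaries at density ρ∈(0,1), for every α < −(Σ + 8√(ρ(1−ρ)))/𝔸, with 𝔸=2ρ(1−ρ)(1−ρ²), one has limsup_{N→∞} φ^{(N)}(α/N) ≤ −Σ, where Σ is the two-boundary interface energy. -/
/-!
Write `g = √f`, `s = √(ρ(1-ρ))`, `D = 𝒟_N(g)` and let `q_j` be the probability, under `f dν`, that
the window `{j-1, j, j+1}` contains an empty site. The bound on `φ^{(N)}(α/N)` combines two lower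
bounds, on the activity and on the Dirichlet form, in terms of the `q_j`.

*Activity* (`activity_site`, `escRate_ge`). A site that is allowed to flip is close to equilibrium
under `f dν`, with an error controlled by the Dirichlet form at that site (`equilibrate`). Given that
`j` is empty, both its neighbours may flip, so `ν(f (1-η_j) η_{j-1} η_{j+1}) ≈ ρ² ν(f (1-η_j))`,
which is at most `ρ² q_j`. Hence `ν(f (1 - η_{j-1} η_{j+1})) ≳ (1-ρ²) q_j`, and summing over `j`
gives `ν(f 𝓗) ≥ 𝔸 Σ_j q_j - O(t D + N/t)` for every `t > 0`.

*Interface* (`dirichlet_ge`, `dirichlet_avg_ge`). Cut `g` off on the event that `j` and `j+1` are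
both occupied. After normalisation this is a competitor for the interface energy of the box, which
is at least `Σ`, since interface energies decrease when the box grows (`Sg_le`). The cut-off changes
the Dirichlet form only through flips of `j` and `j+1`, and these need an empty site at `j-1` or
`j+2`; the cost is at most `2s (q_j + q_{j+1})`. So `D ≥ Σ (1-q_j) - 2s (q_j + q_{j+1})`, and
averaging over `j` bounds `D` below by `Σ - (Σ + 4s) q̄`, with `q̄` the average of the `q_j`.

With `κ = 1 - e^{α/N} ~ |α|/N` and `t = √N`, the functional `-κ ν(f 𝓗) - e^{α/N} D` is at most
`-Σ + (Σ + 4s - |α| 𝔸) q̄ + o(1)`, and the hypothesis on `α` makes the coefficient of `q̄` negative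
(`phiSet_le`).
-/

open Finset Filter

open scoped Classical

/-- A configuration on the box `{1,…,N}` (0-indexed by `Fin N`). -/
abbrev Config (N : ℕ) := Fin N → Bool

/-- Occupation variable `η_i ∈ {0,1}` as a real number. -/
noncomputable def occ {N : ℕ} (η : Config N) (i : Fin N) : ℝ := if η i then 1 else 0

/-- Bernoulli(ρ) product weight of a configuration. -/
noncomputable def bern (ρ : ℝ) {N : ℕ} (η : Config N) : ℝ :=
  ∏ i, (if η i then ρ else 1 - ρ)

/-- Expectation under the Bernoulli(ρ) product measure `ν`. -/
noncomputable def expect (ρ : ℝ) {N : ℕ} (f : Config N → ℝ) : ℝ :=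
  ∑ η : Config N, bern ρ η * f η

/-- The configuration `η^i`, obtained by flipping `η` at site `i`. -/
def flipAt {N : ℕ} (η : Config N) (i : Fin N) : Config N :=
  Function.update η i (!η i)

/-- Occupation at the 1-indexed position `k ∈ {0,…,N+1}`, with boundary value
`bl` at `k = 0` and `br` at `k = N+1` (and beyond). -/
noncomputable def occAt {N : ℕ} (η : Config N) (bl br : ℝ) (k : ℕ) : ℝ :=
  if hk : k = 0 then bl
  else if h : k ≤ N then (if η ⟨k - 1, by omega⟩ then 1 else 0) else br

/-- The three kinetically constrained models considered: East (empty right boundary),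
FA-1f with two empty boundaries, FA-1f with one empty (right) boundary. -/
inductive KCM | east | fa2 | fa1

/-- The kinetic constraint `r_i(η)` of each model, at the (0-indexed) site `i`. -/
noncomputable def constr (m : KCM) {N : ℕ} (η : Config N) (i : Fin N) : ℝ :=
  match m with
  | KCM.east => 1 - occAt η 0 0 (i.1 + 2)
  | KCM.fa2  => 1 - occAt η 0 0 i.1 * occAt η 0 0 (i.1 + 2)
  | KCM.fa1  => 1 - occAt η 1 0 i.1 * occAt η 1 0 (i.1 + 2)

/-- The jump rate `c_i(η) = r_i(η)·[η_i(1−ρ)+(1−η_i)ρ]`. -/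
noncomputable def crate (m : KCM) (ρ : ℝ) {N : ℕ} (η : Config N) (i : Fin N) : ℝ :=
  constr m η i * (if η i then 1 - ρ else ρ)

/-- The escape rate `𝓗(η) = Σ_i c_i(η)`. -/
noncomputable def escRate (m : KCM) (ρ : ℝ) {N : ℕ} (η : Config N) : ℝ :=
  ∑ i, crate m ρ η i

/-- The Dirichlet form `𝒟_N(g) = Σ_i ν(c_i(η)(g(η^i)−g(η))²)`. -/
noncomputable def dirichlet (m : KCM) (ρ : ℝ) {N : ℕ} (g : Config N → ℝ) : ℝ :=
  ∑ i, expect ρ (fun η => crate m ρ η i * (g (flipAt η i) - g η) ^ 2)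

/-- The rescaled cumulant generating function `φ^{(N)}(λ)`, via the
Donsker–Varadhan variational (principal eigenvalue) formula. -/
noncomputable def phi (m : KCM) (ρ : ℝ) (N : ℕ) (lam : ℝ) : ℝ :=
  sSup { x | ∃ f : Config N → ℝ, (∀ η, 0 ≤ f η) ∧ expect ρ f = 1 ∧
    x = (Real.exp lam - 1) * expect ρ (fun η => f η * escRate m ρ η)
        - Real.exp lam * dirichlet m ρ (fun η => Real.sqrt (f η)) }

/-- The mean instantaneous activity `𝔸 = ν(c_j)` at an interior site `j`:
`2ρ(1−ρ)²` for East and `2ρ(1−ρ)(1−ρ²)` for FA-1f. -/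
noncomputable def meanAct (m : KCM) (ρ : ℝ) : ℝ :=
  match m with
  | KCM.east => 2 * ρ * (1 - ρ) ^ 2
  | _ => 2 * ρ * (1 - ρ) * (1 - ρ ^ 2)

/-- The two-boundary interface energy `Σ_{L,L'}` for FA-1f with two empty
boundaries: the infimum of `𝒟_{L+L'+2}(√f)` over probability densities `f`
with `ν(f·η_{L+1}η_{L+2}) = 1`. -/
noncomputable def SigmaTwo (ρ : ℝ) (L L' : ℕ) : ℝ :=
  sInf { x | ∃ f : Config (L + L' + 2) → ℝ, (∀ η, 0 ≤ f η) ∧ expect ρ f = 1 ∧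
    expect ρ (fun η => f η * occ η ⟨L, by omega⟩ * occ η ⟨L + 1, by omega⟩) = 1 ∧
    x = dirichlet KCM.fa2 ρ (fun η => Real.sqrt (f η)) }

/-- The one-boundary interface energy `Σ_L`: the infimum of `𝒟_L(√f)`
over probability densities `f` with `ν(f·η_1) = 1`, for the model `m`. -/
noncomputable def SigmaOne (m : KCM) (ρ : ℝ) (L : ℕ) : ℝ :=
  sInf { x | ∃ f : Config L → ℝ, (∀ η, 0 ≤ f η) ∧ expect ρ f = 1 ∧
    expect ρ (fun η => f η * occAt η 0 0 1) = 1 ∧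
    x = dirichlet m ρ (fun η => Real.sqrt (f η)) }

namespace InactiveRegime

variable {N : ℕ}

/-! ### Occupation variables, flips and the product measure -/

lemma occ_cases (η : Config N) (i : Fin N) : occ η i = 0 ∨ occ η i = 1 := by
  unfold occ; split_ifs <;> simp

lemma occ_nonneg (η : Config N) (i : Fin N) : 0 ≤ occ η i := by
  rcases occ_cases η i with h | h <;> simp [h]

lemma occ_le_one (η : Config N) (i : Fin N) : occ η i ≤ 1 := by
  rcases occ_cases η i with h | h <;> simp [h]

lemma occ_flip_ne (η : Config N) {i k : Fin N} (h : k ≠ i) : occ (flipAt η i) k = occ η k := by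
  simp [occ, flipAt, h]

lemma occ_flip_self (η : Config N) (i : Fin N) : occ (flipAt η i) i = 1 - occ η i := by
  cases h : η i <;> simp [occ, flipAt, h]

lemma flip_flip (i : Fin N) : Function.Involutive (fun η : Config N => flipAt η i) := by
  intro η
  funext k
  by_cases h : k = i
  · subst h; simp [flipAt]
  · simp [flipAt, h]

lemma sum_flip (i : Fin N) (F : Config N → ℝ) : ∑ η, F (flipAt η i) = ∑ η, F η :=
  Equiv.sum_comp (flip_flip i).toPerm F

lemma bern_nonneg {ρ : ℝ} (h0 : 0 < ρ) (h1 : ρ < 1) (η : Config N) : 0 ≤ bern ρ η :=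
  Finset.prod_nonneg fun i _ => by split_ifs <;> linarith

/-- The weights of `η` and `η^i` share the factor `m` coming from the sites other than `i`. -/
lemma bern_factor {ρ : ℝ} (h0 : 0 < ρ) (h1 : ρ < 1) (η : Config N) (i : Fin N) :
    ∃ m : ℝ, 0 ≤ m ∧ bern ρ η = (if η i then ρ else 1 - ρ) * m ∧
      bern ρ (flipAt η i) = (if η i then 1 - ρ else ρ) * m := by
  refine ⟨∏ k ∈ univ.erase i, (if η k then ρ else 1 - ρ), ?_, ?_, ?_⟩
  · exact Finset.prod_nonneg fun i _ => by split_ifs <;> linarith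
  · unfold bern
    rw [← Finset.mul_prod_erase univ _ (mem_univ i)]
  · unfold bern
    rw [← Finset.mul_prod_erase univ _ (mem_univ i)]
    congr 1
    · cases h : η i <;> simp [flipAt, h]
    · refine Finset.prod_congr rfl fun k hk => ?_
      simp [flipAt, Finset.ne_of_mem_erase hk]

lemma expect_mono {ρ : ℝ} (h0 : 0 < ρ) (h1 : ρ < 1) {F G : Config N → ℝ} (h : ∀ η, F η ≤ G η) :
    expect ρ F ≤ expect ρ G :=
  Finset.sum_le_sum fun η _ => mul_le_mul_of_nonneg_left (h η) (bern_nonneg h0 h1 η)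

lemma expect_nonneg {ρ : ℝ} (h0 : 0 < ρ) (h1 : ρ < 1) {F : Config N → ℝ} (h : ∀ η, 0 ≤ F η) :
    0 ≤ expect ρ F :=
  Finset.sum_nonneg fun η _ => mul_nonneg (bern_nonneg h0 h1 η) (h η)

lemma expect_add (ρ : ℝ) (F G : Config N → ℝ) :
    expect ρ (fun η => F η + G η) = expect ρ F + expect ρ G := by
  simp [_root_.expect, mul_add, Finset.sum_add_distrib]

lemma expect_sub (ρ : ℝ) (F G : Config N → ℝ) :
    expect ρ (fun η => F η - G η) = expect ρ F - expect ρ G := by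
  simp [_root_.expect, mul_sub, Finset.sum_sub_distrib]

lemma expect_smul (ρ : ℝ) (c : ℝ) (F : Config N → ℝ) :
    expect ρ (fun η => c * F η) = c * expect ρ F := by
  simp only [_root_.expect, Finset.mul_sum]
  exact Finset.sum_congr rfl fun η _ => by ring

lemma expect_sum {ι : Type*} (s : Finset ι) (ρ : ℝ) (F : ι → Config N → ℝ) :
    expect ρ (fun η => ∑ k ∈ s, F k η) = ∑ k ∈ s, expect ρ (F k) := by
  simp only [_root_.expect, Finset.mul_sum]
  exact Finset.sum_comm

lemma expect_one (ρ : ℝ) : expect ρ (fun _ : Config N => 1) = 1 := by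
  have := Finset.prod_univ_sum (fun _ : Fin N => (univ : Finset Bool))
    (fun _ b => if b then ρ else 1 - ρ)
  simp only [Fintype.piFinset_univ] at this
  simp [_root_.expect, bern, ← this]

/-! ### The constraint and the rates -/

lemma occAt_succ (η : Config N) (k : Fin N) : occAt η 0 0 (k.1 + 1) = occ η k := by
  have : k.1 + 1 ≤ N := k.2
  simp [occAt, occ, this]

lemma occAt_mem (η : Config N) (k : ℕ) : 0 ≤ occAt η 0 0 k ∧ occAt η 0 0 k ≤ 1 := by
  unfold occAt; split_ifs <;> norm_num

lemma occAt_flip (η : Config N) (i : Fin N) (k : ℕ) (h : k ≠ i.1 + 1) :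
    occAt (flipAt η i) 0 0 k = occAt η 0 0 k := by
  unfold occAt
  split_ifs with h1 h2 <;> try rfl
  all_goals
    have hne : (⟨k - 1, by omega⟩ : Fin N) ≠ i := by
      intro hh; apply h; rw [← hh]; simp; omega
    simp_all [flipAt]

lemma constr_mem (η : Config N) (i : Fin N) :
    0 ≤ constr KCM.fa2 η i ∧ constr KCM.fa2 η i ≤ 1 := by
  have h1 := occAt_mem η i.1
  have h2 := occAt_mem η (i.1 + 2)
  simp only [constr]
  constructor <;> nlinarith [mul_nonneg h1.1 h2.1]

lemma constr_flip (η : Config N) (i : Fin N) :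
    constr KCM.fa2 (flipAt η i) i = constr KCM.fa2 η i := by
  simp only [constr]
  rw [occAt_flip _ _ _ (by omega), occAt_flip _ _ _ (by omega)]

lemma constr_mid {a b c : Fin N} (hab : b.1 = a.1 + 1) (hbc : c.1 = b.1 + 1) (η : Config N) :
    constr KCM.fa2 η b = 1 - occ η a * occ η c := by
  simp only [constr]
  rw [← occAt_succ η a, ← occAt_succ η c, hab, hbc, hab]

/-- An empty right neighbour already allows a flip; the left one may be the boundary. -/
lemma constr_left {a b : Fin N} (hab : b.1 = a.1 + 1) (η : Config N) :
    1 - occ η b ≤ constr KCM.fa2 η a := by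
  simp only [constr]
  have : occAt η 0 0 (a.1 + 2) = occ η b := by rw [← occAt_succ η b, hab]
  rw [this]
  have := (occAt_mem η a.1).2
  nlinarith [occ_nonneg η b]

lemma constr_right {a b : Fin N} (hab : b.1 = a.1 + 1) (η : Config N) :
    1 - occ η a ≤ constr KCM.fa2 η b := by
  simp only [constr]
  have : occAt η 0 0 b.1 = occ η a := by rw [← occAt_succ η a, hab]
  rw [this]
  have := (occAt_mem η (b.1 + 2)).2
  nlinarith [occ_nonneg η a]

lemma crate_mem {ρ : ℝ} (h0 : 0 < ρ) (h1 : ρ < 1) (η : Config N) (i : Fin N) :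
    0 ≤ crate KCM.fa2 ρ η i ∧ crate KCM.fa2 ρ η i ≤ 1 := by
  have h := constr_mem η i
  unfold crate
  split_ifs <;> constructor <;> nlinarith [h.1, h.2]

/-- The contribution of site `i` to the Dirichlet form. -/
noncomputable def dirSite (ρ : ℝ) (g : Config N → ℝ) (i : Fin N) : ℝ :=
  expect ρ (fun η => crate KCM.fa2 ρ η i * (g (flipAt η i) - g η) ^ 2)

lemma dirSite_nonneg {ρ : ℝ} (h0 : 0 < ρ) (h1 : ρ < 1) (g : Config N → ℝ) (i : Fin N) :
    0 ≤ dirSite ρ g i :=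
  expect_nonneg h0 h1 fun η => mul_nonneg (crate_mem h0 h1 η i).1 (sq_nonneg _)

lemma dirichlet_eq (ρ : ℝ) (g : Config N → ℝ) :
    dirichlet KCM.fa2 ρ g = ∑ i, dirSite ρ g i := rfl

lemma dirichlet_nonneg {ρ : ℝ} (h0 : 0 < ρ) (h1 : ρ < 1) (g : Config N → ℝ) :
    0 ≤ dirichlet KCM.fa2 ρ g :=
  Finset.sum_nonneg fun i _ => dirSite_nonneg h0 h1 g i

lemma dirichlet_smul (ρ c : ℝ) (g : Config N → ℝ) :
    dirichlet KCM.fa2 ρ (fun η => c * g η) = c ^ 2 * dirichlet KCM.fa2 ρ g := by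
  simp only [dirichlet, Finset.mul_sum, ← expect_smul]
  refine Finset.sum_congr rfl fun i _ => ?_
  congr 1; funext η; ring

/-! ### Local equilibration -/

/-- Where site `i` is allowed to flip, the density `f` nearly decouples from `η_i`: replacing
`η_i` by its mean `ρ` costs at most `t` times the Dirichlet energy of site `i`, plus `1/t`. This form
comes from `2|uv| ≤ t u² + v²/t`, used in place of Cauchy–Schwarz. -/
lemma equilibrate {ρ : ℝ} (h0 : 0 < ρ) (h1 : ρ < 1) {f : Config N → ℝ} (hf : ∀ η, 0 ≤ f η)
    (hf1 : expect ρ f = 1) {t : ℝ} (ht : 0 < t) (i : Fin N) (h : Config N → ℝ)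
    (hflip : ∀ η, h (flipAt η i) = h η) (hr : ∀ η, |h η| ≤ constr KCM.fa2 η i) :
    expect ρ (fun η => f η * (h η * (occ η i - ρ)))
      ≤ t * dirSite ρ (fun η => √(f η)) i + 1 / t := by
  set D := dirSite ρ (fun η => √(f η)) i with hD
  have hDn : 0 ≤ D := dirSite_nonneg h0 h1 _ i
  have e1 : expect ρ (fun η => f η * (h η * (occ η i - ρ)))
      = ∑ η, bern ρ (flipAt η i) * (f (flipAt η i) * (h (flipAt η i) *
          (occ (flipAt η i) i - ρ))) :=
    (sum_flip i (fun η => bern ρ η * (f η * (h η * (occ η i - ρ))))).symm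
  have key : ∀ η : Config N,
      bern ρ η * (f η * (h η * (occ η i - ρ))) +
      bern ρ (flipAt η i) * (f (flipAt η i) * (h (flipAt η i) * (occ (flipAt η i) i - ρ)))
      ≤ (t / 2) * (bern ρ η * (crate KCM.fa2 ρ η i * (√(f (flipAt η i)) - √(f η)) ^ 2))
        + (1 / t) * (bern ρ η * f η + bern ρ (flipAt η i) * f (flipAt η i)) := by
    intro η
    obtain ⟨m, hm, hb, hb'⟩ := bern_factor h0 h1 η i
    rw [hflip, occ_flip_self, hb, hb']
    set g := √(f η) with hg
    set g' := √(f (flipAt η i)) with hg'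
    have q1 : f η = g ^ 2 := (Real.sq_sqrt (hf η)).symm
    have q2 : f (flipAt η i) = g' ^ 2 := (Real.sq_sqrt (hf _)).symm
    have gn : 0 ≤ g := Real.sqrt_nonneg _
    have gn' : 0 ≤ g' := Real.sqrt_nonneg _
    have hc := constr_mem η i
    have hh := hr η
    rw [q1, q2]
    unfold crate
    set r := constr KCM.fa2 η i
    have hp : 0 < ρ * (1 - ρ) := mul_pos h0 (by linarith)
    have hA : ∀ d : ℝ, h η * d ≤ r * |d| := fun d =>
      (le_abs_self _).trans (by rw [abs_mul]; exact mul_le_mul_of_nonneg_right hh (abs_nonneg _))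
    have hB : |g ^ 2 - g' ^ 2| ≤ t / 2 * (g' - g) ^ 2 + (1 / t) * (g ^ 2 + g' ^ 2) := by
      have e : |g ^ 2 - g' ^ 2| = |g' - g| * (g + g') := by
        rw [show g ^ 2 - g' ^ 2 = (g - g') * (g + g') by ring, abs_mul, abs_sub_comm,
          abs_of_nonneg (by linarith : 0 ≤ g + g')]
      rw [e, ← sq_abs (g' - g)]
      have hy : (g + g') ^ 2 ≤ 2 * (g ^ 2 + g' ^ 2) := by nlinarith [sq_nonneg (g - g')]
      have hz : 2 * (|g' - g| * (g + g')) ≤ t * |g' - g| ^ 2 + (1 / t) * (g + g') ^ 2 := by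
        have : t * |g' - g| ^ 2 + (1 / t) * (g + g') ^ 2 - 2 * (|g' - g| * (g + g'))
            = (1 / t) * (t * |g' - g| - (g + g')) ^ 2 := by field_simp; ring
        have : 0 ≤ (1 / t) * (t * |g' - g| - (g + g')) ^ 2 := by positivity
        linarith
      have := mul_le_mul_of_nonneg_left hy (by positivity : 0 ≤ 1 / t)
      linarith
    have hS : 0 ≤ (1 / t) * (g ^ 2 + g' ^ 2) := by positivity
    have hC : ∀ d : ℝ, |d| = |g ^ 2 - g' ^ 2| → m * (ρ * (1 - ρ)) * (h η * d) ≤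
        m * (ρ * (1 - ρ)) * (r * (t / 2 * (g' - g) ^ 2) + (1 / t) * (g ^ 2 + g' ^ 2)) := by
      intro d hd
      refine mul_le_mul_of_nonneg_left ?_ (mul_nonneg hm hp.le)
      have := hA d
      rw [hd] at this
      have := mul_le_mul_of_nonneg_left hB hc.1
      nlinarith [hc.2]
    have hT : m * (1 / t * (g ^ 2 * (ρ * ρ) + g' ^ 2 * ((1 - ρ) * (1 - ρ)))) ≥ 0 := by positivity
    have hT' : m * (1 / t * (g' ^ 2 * (ρ * ρ) + g ^ 2 * ((1 - ρ) * (1 - ρ)))) ≥ 0 := by positivity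
    cases hi : η i
    · have := hC (g' ^ 2 - g ^ 2) (abs_sub_comm _ _)
      simp [occ, hi] at *
      nlinarith
    · have := hC (g ^ 2 - g' ^ 2) rfl
      simp [occ, hi] at *
      nlinarith
  have s := Finset.sum_le_sum fun η (_ : η ∈ (univ : Finset (Config N))) => key η
  simp only [Finset.sum_add_distrib, ← Finset.mul_sum] at s
  rw [← e1, sum_flip i (fun η => bern ρ η * f η)] at s
  change expect ρ _ + _ ≤ t / 2 * D + 1 / t * (expect ρ f + expect ρ f) at s
  rw [hf1] at s
  have : 0 ≤ t * D := by positivity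
  have e : 1 / t * (1 + 1) = 2 * (1 / t) := by ring
  rw [e] at s
  linarith

/-- For consecutive sites `a, b, c`, the mean rate at `b` is at least `2ρ(1-ρ)(1-ρ²)` times the
probability that `a, b, c` are not all occupied, up to an error. Equilibrating `η_b` replaces the
rate by `2ρ(1-ρ)(1 - η_a η_c)`; and when `b` is empty its two neighbours are free to equilibrate,
so `ν(f (1-η_b) η_a η_c) ≈ ρ² ν(f (1-η_b))`. -/
lemma activity_site {ρ : ℝ} (h0 : 0 < ρ) (h1 : ρ < 1) {f : Config N → ℝ} (hf : ∀ η, 0 ≤ f η)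
    (hf1 : expect ρ f = 1) {t : ℝ} (ht : 0 < t) {a b c : Fin N} (hab : b.1 = a.1 + 1)
    (hbc : c.1 = b.1 + 1) :
    (2 * ρ * (1 - ρ) * (1 - ρ ^ 2)) * expect ρ (fun η => f η * (1 - occ η a * occ η b * occ η c))
      - (t * (dirSite ρ (fun η => √(f η)) a + dirSite ρ (fun η => √(f η)) b
          + dirSite ρ (fun η => √(f η)) c) + 3 / t)
      ≤ expect ρ (fun η => f η * crate KCM.fa2 ρ η b) := by
  have nba : b ≠ a := by rintro rfl; omega
  have nca : c ≠ a := by rintro rfl; omega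
  have nbc : b ≠ c := by rintro rfl; omega
  have A := equilibrate h0 h1 hf hf1 ht b (fun η => (2 * ρ - 1) * constr KCM.fa2 η b)
    (fun η => by simp only [constr_flip]) (fun η => by
      have := constr_mem η b
      rw [abs_mul, abs_of_nonneg this.1]
      have : |2 * ρ - 1| ≤ 1 := abs_le.2 ⟨by linarith, by linarith⟩
      nlinarith)
  have B := equilibrate h0 h1 hf hf1 ht a (fun η => (1 - occ η b) * occ η c)
    (fun η => by simp only [occ_flip_ne _ nba, occ_flip_ne _ nca]) (fun η => by
      have := constr_left hab η
      rw [abs_of_nonneg (mul_nonneg (sub_nonneg.2 (occ_le_one η b)) (occ_nonneg η c))]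
      nlinarith [occ_le_one η b, occ_le_one η c])
  have C := equilibrate h0 h1 hf hf1 ht c (fun η => ρ * (1 - occ η b))
    (fun η => by simp only [occ_flip_ne _ nbc]) (fun η => by
      have := constr_right hbc η
      rw [abs_of_nonneg (mul_nonneg h0.le (sub_nonneg.2 (occ_le_one η b)))]
      nlinarith [occ_le_one η b])
  set Da := dirSite ρ (fun η => √(f η)) a
  set Db := dirSite ρ (fun η => √(f η)) b
  set Dc := dirSite ρ (fun η => √(f η)) c
  have hDa : 0 ≤ Da := dirSite_nonneg h0 h1 _ a
  have hDc : 0 ≤ Dc := dirSite_nonneg h0 h1 _ c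
  set K := 2 * ρ * (1 - ρ) with hK
  have hK0 : 0 ≤ K := by have : 0 < 1 - ρ := by linarith
                         positivity
  have hK1 : K ≤ 1 := by nlinarith [sq_nonneg (ρ - 1), sq_nonneg ρ]
  -- pointwise: `c_b` is bounded below by `K (1-ρ²) (1 - η_a η_b η_c)` minus three terms of
  -- mean close to zero
  have P : expect ρ (fun η => (K * (1 - ρ ^ 2)) * (f η * (1 - occ η a * occ η b * occ η c)))
      ≤ expect ρ (fun η => f η * crate KCM.fa2 ρ η b
        + (f η * ((2 * ρ - 1) * constr KCM.fa2 η b * (occ η b - ρ))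
        + (K * (f η * ((1 - occ η b) * occ η c * (occ η a - ρ)))
        + K * (f η * (ρ * (1 - occ η b) * (occ η c - ρ)))))) := by
    refine expect_mono h0 h1 fun η => ?_
    have hr := constr_mid hab hbc η
    have hcr : crate KCM.fa2 ρ η b
        = constr KCM.fa2 η b * (occ η b * (1 - ρ) + (1 - occ η b) * ρ) := by
      unfold crate occ; split_ifs <;> ring
    rw [hcr, hr]
    have hfη := hf η
    have : 0 ≤ f η * (K * ρ ^ 2) := by positivity
    rcases occ_cases η a with x | x <;> rcases occ_cases η b with y | y <;>
      rcases occ_cases η c with z | z <;> rw [x, y, z] <;> rw [hK] at * <;> nlinarith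
  simp only [expect_add, expect_smul] at P
  have B' := mul_le_mul_of_nonneg_left B hK0
  have C' := mul_le_mul_of_nonneg_left C hK0
  have hb : K * (t * Da + 1 / t) ≤ t * Da + 1 / t := by
    have : 0 ≤ t * Da + 1 / t := by positivity
    nlinarith
  have hc : K * (t * Dc + 1 / t) ≤ t * Dc + 1 / t := by
    have : 0 ≤ t * Dc + 1 / t := by positivity
    nlinarith
  have e3 : 3 / t = 1 / t + 1 / t + 1 / t := by ring
  rw [e3]
  linarith

/-! ### Interface energy of a box -/

/-- The values of the Dirichlet form over densities on `Config N` supported on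
`{η_i = η_{i'} = 1}`. For adjacent `i, i'` its infimum is the interface energy `SigmaTwo`. -/
def ieSet (ρ : ℝ) (i i' : Fin N) : Set ℝ :=
  { x | ∃ f : Config N → ℝ, (∀ η, 0 ≤ f η) ∧ expect ρ f = 1 ∧
    expect ρ (fun η => f η * occ η i * occ η i') = 1 ∧
    x = dirichlet KCM.fa2 ρ (fun η => √(f η)) }

lemma ieSet_nonempty {ρ : ℝ} (h0 : 0 < ρ) (i i' : Fin N) : (ieSet ρ i i').Nonempty := by
  have hb : bern ρ (fun _ : Fin N => true) ≠ 0 := by simp [bern, h0.ne']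
  have hb' : 0 ≤ bern ρ (fun _ : Fin N => true) := by simp [bern]; positivity
  refine ⟨_, fun η => if η = fun _ => true then (bern ρ (fun _ : Fin N => true))⁻¹ else 0,
    fun η => ?_, ?_, ?_, rfl⟩
  · dsimp only; split_ifs
    · exact inv_nonneg.2 hb'
    · exact le_rfl
  · simp [_root_.expect, hb]
  · rw [_root_.expect, Finset.sum_eq_single (fun _ => true)]
    · simp [occ, hb]
    · intro η _ h
      simp [h]
    · simp

lemma ieSet_bddBelow {ρ : ℝ} (h0 : 0 < ρ) (h1 : ρ < 1) (i i' : Fin N) :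
    BddBelow (ieSet ρ i i') := by
  refine ⟨0, ?_⟩
  rintro x ⟨f, -, -, -, rfl⟩
  exact dirichlet_nonneg h0 h1 _

lemma ieSet_congr (ρ : ℝ) {M N : ℕ} (h : M = N) (i i' : Fin M) (k k' : Fin N)
    (hi : i.1 = k.1) (hi' : i'.1 = k'.1) : ieSet ρ i i' = ieSet ρ k k' := by
  subst h
  rw [Fin.ext hi, Fin.ext hi']

lemma SigmaTwo_eq (ρ : ℝ) (L L' : ℕ) :
    SigmaTwo ρ L L' = sInf (ieSet ρ (⟨L, by omega⟩ : Fin (L + L' + 2)) ⟨L + 1, by omega⟩) := rfl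

/-- Functions that do not look at the site `p` have the same mean with or without this site. -/
lemma expect_restrict (ρ : ℝ) (p : Fin (N + 1)) (F : Config N → ℝ) :
    expect ρ (fun η : Config (N + 1) => F (fun k => η (p.succAbove k))) = expect ρ F := by
  unfold _root_.expect
  rw [← Equiv.sum_comp (Fin.insertNthEquiv (fun _ => Bool) p), Fintype.sum_prod_type]
  simp only [bern, Fin.prod_univ_succAbove _ p, Fin.insertNthEquiv_apply, Fin.insertNth_apply_same,
    Fin.insertNth_apply_succAbove, Fintype.sum_bool, if_true]
  rw [← Finset.sum_add_distrib]
  refine Finset.sum_congr rfl fun η _ => ?_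
  simp
  ring

/-- Adding a site at an end of the box only tightens the constraints on the old sites. -/
lemma constr_restrict (p : Fin (N + 1)) (hp : p = 0 ∨ p = Fin.last N) (η : Config (N + 1))
    (k : Fin N) : constr KCM.fa2 η (p.succAbove k) ≤
      constr KCM.fa2 (fun k => η (p.succAbove k)) k := by
  have mono : ∀ a a' b b' : ℝ, 0 ≤ a → 0 ≤ b → a ≤ a' → b ≤ b' → 1 - a' * b' ≤ 1 - a * b := by
    intro a a' b b' ha hb h h'
    have := mul_le_mul h h' hb (ha.trans h)
    linarith
  rcases hp with rfl | rfl
  · have H : ∀ j : ℕ, occAt (fun k : Fin N => η ((0 : Fin (N + 1)).succAbove k)) 0 0 j ≤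
        occAt η 0 0 (j + 1) := by
      intro j
      rcases Nat.eq_zero_or_pos j with hj | hj
      · subst hj; exact (occAt_mem η 1).1
      · by_cases hjN : j ≤ N
        · have e : (⟨j - 1, by omega⟩ : Fin N).succ = ⟨j, by omega⟩ := by
            ext; simp; omega
          simp [occAt, hj.ne', hjN, e]
        · simp [occAt, hj.ne', hjN]
    simp only [constr, Fin.zero_succAbove, Fin.val_succ]
    have h1 := H k.1
    have h2 := H (k.1 + 2)
    simp only [Fin.zero_succAbove] at h1 h2
    exact mono _ _ _ _ (occAt_mem _ _).1 (occAt_mem _ _).1 h1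
      (by rw [show k.1 + 1 + 2 = k.1 + 2 + 1 by omega]; exact h2)
  · have H : ∀ j : ℕ, occAt (fun k : Fin N => η ((Fin.last N).succAbove k)) 0 0 j ≤
        occAt η 0 0 j := by
      intro j
      rcases Nat.eq_zero_or_pos j with hj | hj
      · subst hj; simp [occAt]
      · by_cases hjN : j ≤ N
        · have e : (⟨j - 1, by omega⟩ : Fin N).castSucc = ⟨j - 1, by omega⟩ := rfl
          have hjN' : j ≤ N + 1 := by omega
          simp [occAt, hj.ne', hjN, hjN', e]
        · have := (occAt_mem η j).1
          simpa [occAt, hj.ne', hjN] using this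
    simp only [constr, Fin.succAbove_last, Fin.val_castSucc]
    have h1 := H k.1
    have h2 := H (k.1 + 2)
    simp only [Fin.succAbove_last] at h1 h2
    exact mono _ _ _ _ (occAt_mem _ _).1 (occAt_mem _ _).1 h1 h2

lemma dirichlet_restrict {ρ : ℝ} (h0 : 0 < ρ) (h1 : ρ < 1) (p : Fin (N + 1))
    (hp : p = 0 ∨ p = Fin.last N) (g : Config N → ℝ) :
    dirichlet KCM.fa2 ρ (fun η : Config (N + 1) => g (fun k => η (p.succAbove k)))
      ≤ dirichlet KCM.fa2 ρ g := by
  unfold dirichlet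
  rw [Fin.sum_univ_succAbove _ p]
  have e0 : ∀ η : Config (N + 1), (fun k => flipAt η p (p.succAbove k)) =
      fun k => η (p.succAbove k) := fun η => by
    funext k; simp [flipAt, Fin.succAbove_ne]
  have e1 : ∀ (η : Config (N + 1)) (i : Fin N),
      (fun k => flipAt η (p.succAbove i) (p.succAbove k)) =
      flipAt (fun k => η (p.succAbove k)) i := fun η i => by
    funext k
    by_cases h : k = i
    · subst h; simp [flipAt]
    · simp [flipAt, h]
  simp only [e0, e1]
  have z : expect ρ (fun η : Config (N + 1) => crate KCM.fa2 ρ η p *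
      (g (fun k => η (p.succAbove k)) - g (fun k => η (p.succAbove k))) ^ 2) = 0 := by
    simp [_root_.expect]
  rw [z, zero_add]
  refine Finset.sum_le_sum fun i _ => ?_
  rw [← expect_restrict ρ p]
  refine expect_mono h0 h1 fun η => ?_
  refine mul_le_mul_of_nonneg_right ?_ (sq_nonneg _)
  unfold crate
  exact mul_le_mul_of_nonneg_right (constr_restrict p hp η i) (by split_ifs <;> linarith)

lemma ie_mono {ρ : ℝ} (h0 : 0 < ρ) (h1 : ρ < 1) (p : Fin (N + 1))
    (hp : p = 0 ∨ p = Fin.last N) (i i' : Fin N) :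
    sInf (ieSet ρ (p.succAbove i) (p.succAbove i')) ≤ sInf (ieSet ρ i i') := by
  refine le_csInf (ieSet_nonempty h0 i i') ?_
  rintro x ⟨f, hf, hf1, hf2, rfl⟩
  refine (csInf_le (ieSet_bddBelow h0 h1 _ _) ⟨fun η => f (fun k => η (p.succAbove k)),
    fun η => hf _, ?_, ?_, rfl⟩).trans (dirichlet_restrict h0 h1 p hp (fun η => √(f η)))
  · rw [expect_restrict, hf1]
  · rw [← hf2, ← expect_restrict ρ p]
    rfl

lemma SigmaTwo_antitone_right {ρ : ℝ} (h0 : 0 < ρ) (h1 : ρ < 1) (L : ℕ) :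
    Antitone (fun L' => SigmaTwo ρ L L') := by
  refine antitone_nat_of_succ_le fun L' => ?_
  have := ie_mono h0 h1 (Fin.last (L + L' + 2)) (Or.inr rfl) ⟨L, by omega⟩ ⟨L + 1, by omega⟩
  simp only [SigmaTwo_eq]
  refine (le_of_eq ?_).trans this
  congr 1
  exact ieSet_congr ρ (by omega) _ _ _ _ (by simp) (by simp)

lemma SigmaTwo_antitone_left {ρ : ℝ} (h0 : 0 < ρ) (h1 : ρ < 1) (L' : ℕ) :
    Antitone (fun L => SigmaTwo ρ L L') := by
  refine antitone_nat_of_succ_le fun L => ?_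
  have := ie_mono h0 h1 (0 : Fin (L + L' + 2 + 1)) (Or.inl rfl) ⟨L, by omega⟩ ⟨L + 1, by omega⟩
  simp only [SigmaTwo_eq]
  refine (le_of_eq ?_).trans this
  congr 1
  exact ieSet_congr ρ (by omega) _ _ _ _ (by simp) (by simp)

lemma SigmaTwo_nonneg {ρ : ℝ} (h0 : 0 < ρ) (h1 : ρ < 1) (L L' : ℕ) : 0 ≤ SigmaTwo ρ L L' := by
  rw [SigmaTwo_eq]
  refine Real.sInf_nonneg ?_
  rintro x ⟨f, -, -, -, rfl⟩
  exact dirichlet_nonneg h0 h1 _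

/-- The limiting interface energy is a lower bound on every finite box. -/
lemma Sg_le {ρ : ℝ} (h0 : 0 < ρ) (h1 : ρ < 1) {Sg : ℝ} {S : ℕ → ℝ}
    (hS : ∀ L : ℕ, Tendsto (fun L' : ℕ => SigmaTwo ρ L L') atTop (nhds (S L)))
    (hSg : Tendsto S atTop (nhds Sg)) (L L' : ℕ) : Sg ≤ SigmaTwo ρ L L' := by
  have hanti : Antitone S := fun L₁ L₂ h =>
    le_of_tendsto_of_tendsto' (hS L₂) (hS L₁) fun L' => SigmaTwo_antitone_left h0 h1 L' h
  exact (hanti.le_of_tendsto hSg L).trans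
    ((SigmaTwo_antitone_right h0 h1 L).le_of_tendsto (hS L) L')

lemma Sg_nonneg {ρ : ℝ} (h0 : 0 < ρ) (h1 : ρ < 1) {Sg : ℝ} {S : ℕ → ℝ}
    (hS : ∀ L : ℕ, Tendsto (fun L' : ℕ => SigmaTwo ρ L L') atTop (nhds (S L)))
    (hSg : Tendsto S atTop (nhds Sg)) : 0 ≤ Sg :=
  ge_of_tendsto' hSg fun L => ge_of_tendsto' (hS L) fun L' => SigmaTwo_nonneg h0 h1 L L'

/-! ### Localising the Dirichlet form on a pair of occupied sites -/

/-- Rescaling `g 1_E` to a probability density makes it a competitor for the interface energy. -/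
lemma localized_ge {ρ : ℝ} (h0 : 0 < ρ) (h1 : ρ < 1) {Sg : ℝ}
    (hSg : ∀ L L', Sg ≤ SigmaTwo ρ L L') {f : Config N → ℝ} (hf : ∀ η, 0 ≤ f η)
    {i i' : Fin N} (hi : i'.1 = i.1 + 1) :
    Sg * expect ρ (fun η => f η * (occ η i * occ η i'))
      ≤ dirichlet KCM.fa2 ρ (fun η => √(f η) * (occ η i * occ η i')) := by
  set m := expect ρ (fun η => f η * (occ η i * occ η i')) with hm
  have hm0 : 0 ≤ m := expect_nonneg h0 h1 fun η =>
    mul_nonneg (hf η) (mul_nonneg (occ_nonneg _ _) (occ_nonneg _ _))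
  rcases hm0.eq_or_lt with hz | hpos
  · rw [← hz, mul_zero]; exact dirichlet_nonneg h0 h1 _
  have hsq : ∀ η, √(m⁻¹ * (f η * (occ η i * occ η i')))
      = √(m⁻¹) * (√(f η) * (occ η i * occ η i')) := fun η => by
    rw [Real.sqrt_mul (inv_nonneg.2 hm0), Real.sqrt_mul (hf η)]
    congr 2
    rcases occ_cases η i with h | h <;> rcases occ_cases η i' with h' | h' <;> simp [h, h']
  have hle : Sg ≤ sInf (ieSet ρ i i') := by
    refine (hSg i.1 (N - 2 - i.1)).trans (le_of_eq ?_)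
    rw [SigmaTwo_eq]
    congr 1
    exact ieSet_congr ρ (by omega) _ _ _ _ rfl hi.symm
  have hmem : dirichlet KCM.fa2 ρ (fun η => √(m⁻¹ * (f η * (occ η i * occ η i'))))
      ∈ ieSet ρ i i' := by
    refine ⟨fun η => m⁻¹ * (f η * (occ η i * occ η i')), fun η => ?_, ?_, ?_, rfl⟩
    · exact mul_nonneg (inv_nonneg.2 hm0)
        (mul_nonneg (hf η) (mul_nonneg (occ_nonneg _ _) (occ_nonneg _ _)))
    · rw [expect_smul, ← hm, inv_mul_cancel₀ hpos.ne']
    · have : (fun η : Config N => m⁻¹ * (f η * (occ η i * occ η i')) * occ η i * occ η i')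
          = fun η => m⁻¹ * (f η * (occ η i * occ η i')) := by
        funext η
        rcases occ_cases η i with h | h <;> rcases occ_cases η i' with h' | h' <;> simp [h, h']
      rw [this, expect_smul, ← hm, inv_mul_cancel₀ hpos.ne']
  have := hle.trans (csInf_le (ieSet_bddBelow h0 h1 _ _) hmem)
  simp only [hsq] at this
  rw [dirichlet_smul, Real.sq_sqrt (inv_nonneg.2 hm0), inv_mul_eq_div, le_div_iff₀ hpos] at this
  exact this

lemma dirSite_localize_other {ρ : ℝ} (h0 : 0 < ρ) (h1 : ρ < 1) (g : Config N → ℝ)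
    {i i' k : Fin N} (hk : i ≠ k) (hk' : i' ≠ k) :
    dirSite ρ (fun η => g η * (occ η i * occ η i')) k ≤ dirSite ρ g k := by
  refine expect_mono h0 h1 fun η => ?_
  dsimp only
  rw [occ_flip_ne _ hk, occ_flip_ne _ hk']
  refine mul_le_mul_of_nonneg_left ?_ (crate_mem h0 h1 η k).1
  rw [← sub_mul, mul_pow]
  have e : (occ η i * occ η i') ^ 2 ≤ 1 := by
    rcases occ_cases η i with h | h <;> rcases occ_cases η i' with h' | h' <;> simp [h, h']
  nlinarith [sq_nonneg (g (flipAt η k) - g η)]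

/-- Cutting `g` off at `η_i η_b = 1` costs, at a site `i` with neighbours `x` and `b`, only the
cross term `2 g(η) g(η^i)`. As `b` is occupied, `i` flips only when `x` is empty, whence the
factor `1 - η_x`; reversibility turns the rate into `√(ρ(1-ρ))`. -/
lemma dirSite_localize_self {ρ : ℝ} (h0 : 0 < ρ) (h1 : ρ < 1) {f : Config N → ℝ}
    (hf : ∀ η, 0 ≤ f η) {i b x : Fin N} (hb : b ≠ i) (hx : x ≠ i)
    (hc : ∀ η, constr KCM.fa2 η i = 1 - occ η x * occ η b) :
    dirSite ρ (fun η => √(f η) * (occ η i * occ η b)) i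
      ≤ dirSite ρ (fun η => √(f η)) i
        + 2 * √(ρ * (1 - ρ)) * expect ρ (fun η => f η * (1 - occ η x)) := by
  set s := √(ρ * (1 - ρ)) with hs
  have hp : 0 < ρ * (1 - ρ) := mul_pos h0 (by linarith)
  have hs2 : s ^ 2 = ρ * (1 - ρ) := Real.sq_sqrt hp.le
  have hs0 : 0 ≤ s := Real.sqrt_nonneg _
  have key : ∀ η : Config N,
      bern ρ η * (crate KCM.fa2 ρ η i * (√(f (flipAt η i)) * (occ (flipAt η i) i *
        occ (flipAt η i) b) - √(f η) * (occ η i * occ η b)) ^ 2)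
      ≤ bern ρ η * (crate KCM.fa2 ρ η i * (√(f (flipAt η i)) - √(f η)) ^ 2)
        + s * (bern ρ η * (f η * (1 - occ η x)) +
          bern ρ (flipAt η i) * (f (flipAt η i) * (1 - occ (flipAt η i) x))) := by
    intro η
    obtain ⟨m, hm, hb1, hb2⟩ := bern_factor h0 h1 η i
    rw [occ_flip_self, occ_flip_ne _ hb, occ_flip_ne _ hx, hb1, hb2]
    set g := √(f η) with hg
    set g' := √(f (flipAt η i)) with hg'
    have q1 : f η = g ^ 2 := (Real.sq_sqrt (hf η)).symm
    have q2 : f (flipAt η i) = g' ^ 2 := (Real.sq_sqrt (hf _)).symm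
    have gn : 0 ≤ g := Real.sqrt_nonneg _
    have gn' : 0 ≤ g' := Real.sqrt_nonneg _
    rw [q1, q2]
    unfold crate
    rw [hc]
    have h1' : 0 < 1 - ρ := by linarith
    have amgm : ∀ u v : ℝ, 0 ≤ u → 0 ≤ v →
        m * (ρ * (1 - ρ)) * (2 * (u * v)) ≤ s * (m * (ρ * u ^ 2 + (1 - ρ) * v ^ 2)) := by
      intro u v hu hv
      have : 2 * s * (u * v) ≤ ρ * u ^ 2 + (1 - ρ) * v ^ 2 := by
        have e : s = √ρ * √(1 - ρ) := Real.sqrt_mul h0.le _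
        have a1 := Real.sq_sqrt h0.le
        have a2 := Real.sq_sqrt h1'.le
        have := sq_nonneg (√ρ * u - √(1 - ρ) * v)
        rw [e]
        nlinarith
      have := mul_le_mul_of_nonneg_left this (mul_nonneg hm hs0)
      rw [← hs2]
      nlinarith
    have A1 := amgm g g' gn gn'
    have A2 := amgm g' g gn' gn
    have B1 : 0 ≤ m * (ρ * (1 - ρ)) * (g' - g) ^ 2 := by positivity
    have B2 : 0 ≤ s * (m * (ρ * g ^ 2 + (1 - ρ) * g' ^ 2)) := by positivity
    have B3 : 0 ≤ s * (m * (ρ * g' ^ 2 + (1 - ρ) * g ^ 2)) := by positivity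
    have B4 : 0 ≤ m * (ρ * (1 - ρ)) * g ^ 2 := by positivity
    have B5 : 0 ≤ m * (ρ * (1 - ρ)) * g' ^ 2 := by positivity
    rcases occ_cases η x with hx' | hx' <;> rcases occ_cases η b with hb' | hb' <;>
      rw [hx', hb'] <;> cases hi : η i <;>
      simp only [occ, hi, Bool.false_eq_true, if_false, if_true] <;> linarith
  have := Finset.sum_le_sum fun η (_ : η ∈ (univ : Finset (Config N))) => key η
  simp only [Finset.sum_add_distrib, ← Finset.mul_sum] at this
  rw [sum_flip i (fun η => bern ρ η * (f η * (1 - occ η x)))] at this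
  unfold dirSite _root_.expect
  linarith

/-- Lower bound on the Dirichlet form by the interface energy at the pair `(i, i')`, whose outer
neighbours are `x` and `w`. -/
lemma dirichlet_ge {ρ : ℝ} (h0 : 0 < ρ) (h1 : ρ < 1) {Sg : ℝ}
    (hSg : ∀ L L', Sg ≤ SigmaTwo ρ L L') {f : Config N → ℝ} (hf : ∀ η, 0 ≤ f η)
    {x i i' w : Fin N} (hx : i.1 = x.1 + 1) (hi : i'.1 = i.1 + 1) (hw : w.1 = i'.1 + 1) :
    Sg * expect ρ (fun η => f η * (occ η i * occ η i'))
      - 2 * √(ρ * (1 - ρ)) * expect ρ (fun η => f η * (1 - occ η x))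
      - 2 * √(ρ * (1 - ρ)) * expect ρ (fun η => f η * (1 - occ η w))
      ≤ dirichlet KCM.fa2 ρ (fun η => √(f η)) := by
  have n1 : i' ≠ i := by rintro rfl; omega
  have n2 : x ≠ i := by rintro rfl; omega
  have n3 : w ≠ i' := by rintro rfl; omega
  have E := localized_ge h0 h1 hSg hf hi
  have s1 := dirSite_localize_self h0 h1 hf n1 n2 (fun η => constr_mid hx hi η)
  have s2 := dirSite_localize_self h0 h1 hf n1.symm n3
    (fun η => (constr_mid hi hw η).trans (by ring))
  set A := 2 * √(ρ * (1 - ρ)) * expect ρ (fun η => f η * (1 - occ η x))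
  set B := 2 * √(ρ * (1 - ρ)) * expect ρ (fun η => f η * (1 - occ η w))
  have comm : (fun η : Config N => √(f η) * (occ η i' * occ η i))
      = fun η => √(f η) * (occ η i * occ η i') := by funext η; ring
  rw [comm] at s2
  have tot : dirichlet KCM.fa2 ρ (fun η => √(f η) * (occ η i * occ η i'))
      ≤ ∑ k, (dirSite ρ (fun η => √(f η)) k + ((if k = i then A else 0)
        + (if k = i' then B else 0))) := by
    rw [dirichlet_eq]
    refine Finset.sum_le_sum fun k _ => ?_
    by_cases hk : k = i
    · subst hk; simpa [n1.symm] using s1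
    · by_cases hk' : k = i'
      · subst hk'; simpa [hk] using s2
      · simpa [hk, hk'] using
          dirSite_localize_other h0 h1 (fun η => √(f η)) (Ne.symm hk) (Ne.symm hk')
  simp only [Finset.sum_add_distrib, Finset.sum_ite_eq', mem_univ, if_true, ← dirichlet_eq] at tot
  linarith

end InactiveRegime

namespace InactiveRegime

/-! ### Averaging over the box -/

/-- The probability under `f dν` that the window `{j, j+1, j+2}` contains an empty site. -/
noncomputable def windowProb (ρ : ℝ) {M : ℕ} (f : Config (M + 3) → ℝ) (j : Fin (M + 1)) : ℝ :=
  expect ρ (fun η => f η *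
    (1 - occ η j.castSucc.castSucc * occ η j.succ.castSucc * occ η j.succ.succ))

lemma windowProb_nonneg {ρ : ℝ} (h0 : 0 < ρ) (h1 : ρ < 1) {M : ℕ} {f : Config (M + 3) → ℝ}
    (hf : ∀ η, 0 ≤ f η) (j : Fin (M + 1)) : 0 ≤ windowProb ρ f j := by
  refine expect_nonneg h0 h1 fun η => mul_nonneg (hf η) ?_
  rcases occ_cases η j.castSucc.castSucc with x | x <;>
    rcases occ_cases η j.succ.castSucc with y | y <;>
    rcases occ_cases η j.succ.succ with z | z <;> rw [x, y, z] <;> norm_num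

/-- The total escape rate is at least `2ρ(1-ρ)(1-ρ²)` times the expected number of windows that
contain an empty site, up to an error controlled by the Dirichlet form. -/
lemma escRate_ge {ρ : ℝ} (h0 : 0 < ρ) (h1 : ρ < 1) {M : ℕ} {f : Config (M + 3) → ℝ}
    (hf : ∀ η, 0 ≤ f η) (hf1 : expect ρ f = 1) {t : ℝ} (ht : 0 < t) :
    (2 * ρ * (1 - ρ) * (1 - ρ ^ 2)) * ∑ j, windowProb ρ f j
      - (3 * t * dirichlet KCM.fa2 ρ (fun η => √(f η)) + 3 * (M + 3) / t)
      ≤ expect ρ (fun η => f η * escRate KCM.fa2 ρ η) := by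
  set d := dirSite ρ (fun η => √(f η)) with hd
  have hdn : ∀ i, 0 ≤ d i := fun i => dirSite_nonneg h0 h1 _ i
  have hsite : ∀ j : Fin (M + 1), _ := fun j =>
    activity_site h0 h1 hf hf1 ht (a := j.castSucc.castSucc) (b := j.succ.castSucc)
      (c := j.succ.succ) (by simp) (by simp)
  have hsum := Finset.sum_le_sum fun j (_ : j ∈ (univ : Finset (Fin (M + 1)))) => hsite j
  rw [Finset.sum_sub_distrib, ← Finset.mul_sum, Finset.sum_add_distrib, ← Finset.mul_sum,
    Finset.sum_add_distrib, Finset.sum_add_distrib] at hsum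
  -- each of the three shifted sums over windows is a part of a sum over all sites
  have sub : ∀ F : Fin (M + 3) → ℝ, (∀ i, 0 ≤ F i) →
      ∑ j : Fin (M + 1), F j.castSucc.castSucc ≤ ∑ i, F i ∧
      ∑ j : Fin (M + 1), F j.succ.castSucc ≤ ∑ i, F i ∧
      ∑ j : Fin (M + 1), F j.succ.succ ≤ ∑ i, F i := by
    intro F hF
    have hc : ∀ (n : ℕ) (G : Fin (n + 1) → ℝ), (∀ i, 0 ≤ G i) →
        ∑ j : Fin n, G j.castSucc ≤ ∑ i, G i :=
      fun n G hG => by rw [Fin.sum_univ_castSucc]; linarith [hG (Fin.last n)]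
    have hs : ∀ (n : ℕ) (G : Fin (n + 1) → ℝ), (∀ i, 0 ≤ G i) →
        ∑ j : Fin n, G j.succ ≤ ∑ i, G i :=
      fun n G hG => by rw [Fin.sum_univ_succ]; linarith [hG 0]
    have hF1 := hc _ F hF
    have hF2 := hs _ F hF
    exact ⟨(hc _ (fun i => F i.castSucc) fun _ => hF _).trans hF1,
      (hs _ (fun i => F i.castSucc) fun _ => hF _).trans hF1,
      (hs _ (fun i => F i.succ) fun _ => hF _).trans hF2⟩
  have hD := sub d hdn
  have hE : expect ρ (fun η => f η * escRate KCM.fa2 ρ η)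
      = ∑ i, expect ρ (fun η => f η * crate KCM.fa2 ρ η i) := by
    rw [← expect_sum]
    simp only [escRate, Finset.mul_sum]
  have hH := (sub (fun i => expect ρ (fun η => f η * crate KCM.fa2 ρ η i)) fun i =>
    expect_nonneg h0 h1 fun η => mul_nonneg (hf η) (crate_mem h0 h1 η i).1).2.1
  rw [dirichlet_eq, hE]
  have hcard : ∑ _j : Fin (M + 1), 3 / t = (M + 1) * (3 / t) := by simp
  rw [hcard] at hsum
  have h3 : (M + 1) * (3 / t) ≤ 3 * (M + 3) / t := by
    rw [mul_div_assoc', div_le_div_iff_of_pos_right ht]; linarith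
  have h4 : t * (∑ j : Fin (M + 1), d j.castSucc.castSucc + ∑ j : Fin (M + 1), d j.succ.castSucc
      + ∑ j : Fin (M + 1), d j.succ.succ) ≤ 3 * t * ∑ i, d i := by
    have := mul_le_mul_of_nonneg_left (add_le_add (add_le_add hD.1 hD.2.1) hD.2.2) ht.le
    linarith
  unfold windowProb
  linarith

/-- The interface bound at all adjacent pairs, averaged over their position. -/
lemma dirichlet_avg_ge {ρ : ℝ} (h0 : 0 < ρ) (h1 : ρ < 1) {Sg : ℝ} (hSg0 : 0 ≤ Sg)
    (hSg : ∀ L L', Sg ≤ SigmaTwo ρ L L') {M : ℕ} {f : Config (M + 3) → ℝ}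
    (hf : ∀ η, 0 ≤ f η) (hf1 : expect ρ f = 1) :
    Sg * M - (Sg + 4 * √(ρ * (1 - ρ))) * ∑ j, windowProb ρ f j
      ≤ M * dirichlet KCM.fa2 ρ (fun η => √(f η)) := by
  set D := dirichlet KCM.fa2 ρ (fun η => √(f η)) with hD
  set s := √(ρ * (1 - ρ)) with hs
  have hs0 : 0 ≤ s := Real.sqrt_nonneg _
  have hpair : ∀ k : Fin M, Sg * (1 - windowProb ρ f k.castSucc)
      - 2 * s * windowProb ρ f k.castSucc - 2 * s * windowProb ρ f k.succ ≤ D := by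
    intro k
    have h := dirichlet_ge h0 h1 hSg hf (x := k.castSucc.castSucc.castSucc)
      (i := k.castSucc.succ.castSucc) (i' := k.castSucc.succ.succ) (w := k.succ.succ.succ)
      (by simp) (by simp) (by simp)
    refine le_trans ?_ h
    have e1 : 1 - windowProb ρ f k.castSucc ≤ expect ρ (fun η =>
        f η * (occ η k.castSucc.succ.castSucc * occ η k.castSucc.succ.succ)) := by
      have e : 1 - windowProb ρ f k.castSucc = expect ρ f - windowProb ρ f k.castSucc := by rw [hf1]
      rw [e, windowProb, ← expect_sub]
      refine expect_mono h0 h1 fun η => ?_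
      have := hf η
      rcases occ_cases η k.castSucc.castSucc.castSucc with x | x <;>
        rcases occ_cases η k.castSucc.succ.castSucc with y | y <;>
        rcases occ_cases η k.castSucc.succ.succ with z | z <;> rw [x, y, z] <;> linarith
    have e2 : expect ρ (fun η => f η * (1 - occ η k.castSucc.castSucc.castSucc))
        ≤ windowProb ρ f k.castSucc := by
      refine expect_mono h0 h1 fun η => mul_le_mul_of_nonneg_left ?_ (hf η)
      rcases occ_cases η k.castSucc.castSucc.castSucc with x | x <;>
        rcases occ_cases η k.castSucc.succ.castSucc with y | y <;>
        rcases occ_cases η k.castSucc.succ.succ with z | z <;> rw [x, y, z] <;> norm_num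
    have e3 : expect ρ (fun η => f η * (1 - occ η k.succ.succ.succ))
        ≤ windowProb ρ f k.succ := by
      refine expect_mono h0 h1 fun η => mul_le_mul_of_nonneg_left ?_ (hf η)
      rcases occ_cases η k.succ.castSucc.castSucc with x | x <;>
        rcases occ_cases η k.succ.succ.castSucc with y | y <;>
        rcases occ_cases η k.succ.succ.succ with z | z <;> rw [x, y, z] <;> norm_num
    have := mul_le_mul_of_nonneg_left e1 hSg0
    have := mul_le_mul_of_nonneg_left e2 (by positivity : 0 ≤ 2 * s)
    have := mul_le_mul_of_nonneg_left e3 (by positivity : 0 ≤ 2 * s)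
    linarith
  have hsum := Finset.sum_le_sum fun k (_ : k ∈ (univ : Finset (Fin M))) => hpair k
  simp only [Finset.sum_sub_distrib, ← Finset.mul_sum] at hsum
  simp only [Finset.sum_const, Finset.card_univ, Fintype.card_fin, nsmul_eq_mul, mul_one] at hsum
  have hl : ∑ k : Fin M, windowProb ρ f k.castSucc ≤ ∑ j, windowProb ρ f j := by
    rw [Fin.sum_univ_castSucc]; linarith [windowProb_nonneg h0 h1 hf (Fin.last M)]
  have hr : ∑ k : Fin M, windowProb ρ f k.succ ≤ ∑ j, windowProb ρ f j := by
    rw [Fin.sum_univ_succ]; linarith [windowProb_nonneg h0 h1 hf (0 : Fin (M + 1))]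
  have := mul_le_mul_of_nonneg_left hl (by positivity : 0 ≤ Sg + 2 * s)
  have := mul_le_mul_of_nonneg_left hr (by positivity : 0 ≤ 2 * s)
  linarith

/-! ### The variational problem -/

/-- The set over which `phi` takes a supremum. -/
def phiSet (ρ : ℝ) (N : ℕ) (lam : ℝ) : Set ℝ :=
  { x | ∃ f : Config N → ℝ, (∀ η, 0 ≤ f η) ∧ expect ρ f = 1 ∧
    x = (Real.exp lam - 1) * expect ρ (fun η => f η * escRate KCM.fa2 ρ η)
        - Real.exp lam * dirichlet KCM.fa2 ρ (fun η => √(f η)) }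

lemma phi_eq (ρ : ℝ) (N : ℕ) (lam : ℝ) : phi KCM.fa2 ρ N lam = sSup (phiSet ρ N lam) := rfl

/-- Bound on the variational problem at finite `N`. Under `hq`, the activity of every window
outweighs the interface energy lost there, so that the window probabilities drop out. -/
lemma phiSet_le {ρ : ℝ} (h0 : 0 < ρ) (h1 : ρ < 1) {Sg : ℝ} (hSg0 : 0 ≤ Sg)
    (hSg : ∀ L L', Sg ≤ SigmaTwo ρ L L') {N : ℕ} (hN : 4 ≤ N) {lam t κ θ : ℝ} (ht : 0 < t)
    (hκ : κ = 1 - Real.exp lam) (hκ0 : 0 ≤ κ) (hθ : θ = Real.exp lam - 3 * κ * t) (hθ0 : 0 ≤ θ)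
    (hq : θ * (Sg + 4 * √(ρ * (1 - ρ))) ≤ κ * (2 * ρ * (1 - ρ) * (1 - ρ ^ 2)) * (N - 3))
    {x : ℝ} (hx : x ∈ phiSet ρ N lam) :
    x ≤ -(θ * Sg) + 3 * κ * (N / t) := by
  obtain ⟨M, rfl⟩ : ∃ M, N = M + 3 := ⟨N - 3, by omega⟩
  obtain ⟨f, hf, hf1, rfl⟩ := hx
  have hM : (0 : ℝ) < M := by exact_mod_cast (by omega : 0 < M)
  have a := escRate_ge h0 h1 hf hf1 ht
  have b := dirichlet_avg_ge h0 h1 hSg0 hSg hf hf1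
  have hQ : 0 ≤ ∑ j, windowProb ρ f j :=
    Finset.sum_nonneg fun j _ => windowProb_nonneg h0 h1 hf j
  push_cast at hq ⊢
  set D := dirichlet KCM.fa2 ρ (fun η => √(f η))
  set H := expect ρ (fun η => f η * escRate KCM.fa2 ρ η)
  set Q := ∑ j, windowProb ρ f j
  set A := 2 * ρ * (1 - ρ) * (1 - ρ ^ 2)
  have a' := mul_le_mul_of_nonneg_left a hκ0
  have b' := mul_le_mul_of_nonneg_left b hθ0
  have q' := mul_le_mul_of_nonneg_right hq hQ
  have c : θ * Sg - κ * A * Q ≤ θ * D := by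
    refine le_of_mul_le_mul_left ?_ hM
    nlinarith
  have e : Real.exp lam = θ + 3 * κ * t := by rw [hθ]; ring
  have e1 : Real.exp lam - 1 = -κ := by rw [hκ]; ring
  rw [e1, e]
  have e2 : 3 * κ * (((M : ℝ) + 3) / t) = κ * (3 * (M + 3) / t) := by ring
  rw [e2]
  linarith

/-- The constant density is a competitor for `phi`; it bounds `phi` from below. -/
lemma phiSet_mem {ρ : ℝ} (h0 : 0 < ρ) (h1 : ρ < 1) {N : ℕ} (hN : 0 < N) {α : ℝ} (hα : α ≤ 0) :
    ∃ x ∈ phiSet ρ N (α / N), α ≤ x := by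
  refine ⟨_, ⟨fun _ => 1, fun _ => zero_le_one, expect_one ρ, rfl⟩, ?_⟩
  have hN' : (0 : ℝ) < N := by exact_mod_cast hN
  have z : dirichlet KCM.fa2 ρ (fun _ : Config N => √(1 : ℝ)) = 0 := by
    simp [dirichlet, _root_.expect]
  have hH : expect ρ (fun η : Config N => 1 * escRate KCM.fa2 ρ η) ≤ N := by
    have : expect ρ (fun η : Config N => 1 * escRate KCM.fa2 ρ η)
        ≤ expect ρ (fun _ : Config N => (N : ℝ) * 1) := by
      refine expect_mono h0 h1 fun η => ?_
      have := Finset.sum_le_sum fun i (_ : i ∈ (univ : Finset (Fin N))) => (crate_mem h0 h1 η i).2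
      simpa [escRate] using this
    rwa [expect_smul ρ (N : ℝ) (fun _ => 1), expect_one, mul_one] at this
  have hle : Real.exp (α / N) ≤ 1 :=
    Real.exp_le_one_iff.2 (div_nonpos_of_nonpos_of_nonneg hα hN'.le)
  have hge := Real.add_one_le_exp (α / N)
  have e : α / N * N = α := by field_simp
  rw [z]
  nlinarith

lemma tendsto_mul_exp_sub_one (α : ℝ) :
    Tendsto (fun N : ℕ => (N : ℝ) * (Real.exp (α / N) - 1)) atTop (nhds α) := by
  have hd : HasDerivAt (fun x : ℝ => Real.exp (α * x)) α 0 := by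
    have := ((hasDerivAt_id (0 : ℝ)).const_mul α).exp
    simpa using this
  have h := hd.tendsto_slope_zero
  have hinv : Tendsto (fun N : ℕ => ((N : ℝ))⁻¹) atTop (nhdsWithin 0 {0}ᶜ) :=
    ((tendsto_inv_atTop_nhdsGT_zero (𝕜 := ℝ)).comp tendsto_natCast_atTop_atTop).mono_right
      (nhdsWithin_mono _ fun x hx => ne_of_gt hx)
  refine (h.comp hinv).congr fun N => ?_
  simp [div_eq_mul_inv]

end InactiveRegime

/-- **Lemma 5.3** (upper bound in the inactive regime). For FA-1f with two empty
boundaries at density `ρ ∈ (0,1)` and every `α < −(Σ + 8√(ρ(1−ρ)))/𝔸` with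
`𝔸 = 2ρ(1−ρ)(1−ρ²)`, one has `limsup_{N→∞} φ^{(N)}(α/N) ≤ −Σ`, where `Σ` is
the two-boundary interface energy. -/
theorem inactive_regime_upper_bound_fa2 (ρ : ℝ) (hρ0 : 0 < ρ) (hρ1 : ρ < 1)
    (Sg : ℝ) (S : ℕ → ℝ)
    (hS : ∀ L : ℕ, Filter.Tendsto (fun L' : ℕ => SigmaTwo ρ L L') Filter.atTop (nhds (S L)))
    (hSg : Filter.Tendsto S Filter.atTop (nhds Sg))
    (α : ℝ)
    (hα : α < -(Sg + 8 * Real.sqrt (ρ * (1 - ρ))) / (2 * ρ * (1 - ρ) * (1 - ρ ^ 2))) :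
    Filter.limsup (fun N : ℕ => phi KCM.fa2 ρ N (α / N)) Filter.atTop ≤ -Sg := by
  have hle := InactiveRegime.Sg_le hρ0 hρ1 hS hSg
  have hSg0 := InactiveRegime.Sg_nonneg hρ0 hρ1 hS hSg
  set s := Real.sqrt (ρ * (1 - ρ)) with hs
  have h1 : 0 < 1 - ρ := by linarith
  have hs0 : 0 < s := Real.sqrt_pos.2 (by positivity)
  set A := 2 * ρ * (1 - ρ) * (1 - ρ ^ 2) with hA
  have hA0 : 0 < A := by
    have : 0 < 1 - ρ ^ 2 := by nlinarith
    positivity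
  rw [lt_div_iff₀ hA0] at hα
  have hα0 : α < 0 := by
    by_contra hcon
    have := mul_nonneg (not_lt.1 hcon) hA0.le
    linarith
  set κ : ℕ → ℝ := fun N => 1 - Real.exp (α / N) with hκ
  -- the choice `t = √N` makes both error terms of the finite-`N` bound of order `1/√N`
  set θ : ℕ → ℝ := fun N => Real.exp (α / N) - 3 * κ N * √(N : ℝ) with hθ
  have hκ0 : ∀ N, 0 ≤ κ N := fun N => by
    have : Real.exp (α / N) ≤ 1 :=
      Real.exp_le_one_iff.2 (div_nonpos_of_nonpos_of_nonneg hα0.le (Nat.cast_nonneg N))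
    simp only [hκ]; linarith
  have lN : Tendsto (fun N : ℕ => (N : ℝ)) atTop atTop := tendsto_natCast_atTop_atTop
  have lκN : Tendsto (fun N : ℕ => κ N * N) atTop (nhds (-α)) := by
    refine (InactiveRegime.tendsto_mul_exp_sub_one α).neg.congr fun N => ?_
    simp only [hκ]; ring
  have lexp : Tendsto (fun N : ℕ => Real.exp (α / N)) atTop (nhds 1) := by
    have := (Real.continuous_exp.tendsto 0).comp (lN.const_div_atTop α)
    simpa [Function.comp_def] using this
  have lκ : Tendsto κ atTop (nhds 0) := by simpa using lexp.const_sub 1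
  have lκs : Tendsto (fun N : ℕ => κ N * √(N : ℝ)) atTop (nhds 0) := by
    refine (lκN.div_atTop (Real.tendsto_sqrt_atTop.comp lN)).congr fun N => ?_
    simp only [Function.comp]
    rw [mul_div_assoc, Real.div_sqrt]
  have lθ : Tendsto θ atTop (nhds 1) := by
    have := lexp.sub (lκs.const_mul 3)
    simp only [mul_zero, sub_zero] at this
    exact this.congr fun N => by simp only [hθ]; ring
  have lbound : Tendsto (fun N : ℕ => -(θ N * Sg) + 3 * (κ N * √(N : ℝ))) atTop (nhds (-Sg)) := by
    have := (lθ.mul_const Sg).neg.add (lκs.const_mul 3)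
    simpa using this
  have hq : ∀ᶠ N : ℕ in atTop, θ N * (Sg + 4 * s) ≤ κ N * A * (N - 3) := by
    have l1 := lθ.mul_const (Sg + 4 * s)
    have l2 : Tendsto (fun N : ℕ => κ N * A * ((N : ℝ) - 3)) atTop (nhds (-α * A)) := by
      have := (lκN.mul_const A).sub (lκ.const_mul (3 * A))
      simp only [mul_zero, sub_zero] at this
      exact this.congr fun N => by ring
    exact (l1.eventually_lt l2 (by linarith)).mono fun N h => h.le
  have hbd : ∀ᶠ N : ℕ in atTop, ∀ x ∈ InactiveRegime.phiSet ρ N (α / N),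
      x ≤ -(θ N * Sg) + 3 * (κ N * √(N : ℝ)) := by
    filter_upwards [hq, lθ.eventually_const_lt zero_lt_one, eventually_ge_atTop 4]
      with N hqN hθN hN x hx
    have hN' : (0 : ℝ) < N := by exact_mod_cast (by omega : 0 < N)
    have := InactiveRegime.phiSet_le hρ0 hρ1 hSg0 hle hN (Real.sqrt_pos.2 hN') rfl (hκ0 N) rfl
      hθN.le hqN hx
    rw [Real.div_sqrt] at this
    linarith
  have hup : ∀ᶠ N : ℕ in atTop,
      phi KCM.fa2 ρ N (α / N) ≤ -(θ N * Sg) + 3 * (κ N * √(N : ℝ)) := by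
    filter_upwards [hbd, eventually_gt_atTop 0] with N h hN
    obtain ⟨x, hx, -⟩ := InactiveRegime.phiSet_mem hρ0 hρ1 hN hα0.le
    rw [InactiveRegime.phi_eq]
    exact csSup_le ⟨x, hx⟩ h
  -- a lower bound is needed as well: the `limsup` of a sequence tending to `-∞` has a junk value
  have hlow : ∀ᶠ N : ℕ in atTop, α ≤ phi KCM.fa2 ρ N (α / N) := by
    filter_upwards [hbd, eventually_gt_atTop 0] with N h hN
    obtain ⟨x, hx, hαx⟩ := InactiveRegime.phiSet_mem hρ0 hρ1 hN hα0.le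
    rw [InactiveRegime.phi_eq]
    exact hαx.trans (le_csSup ⟨_, h⟩ hx)
  rw [← lbound.limsup_eq]
  exact limsup_le_limsup hup (isBoundedUnder_of_eventually_ge hlow).isCoboundedUnder_le
    lbound.isBoundedUnder_le
end

section
/- Theorem 2.1(ii) for the East model and the FA-1f model with one empty boundary (Section 5.2). Let Σ = lim_{L→∞} Σ_L be the one-boundary interface energy of the corresponding model at density ρ∈(0,1) and 𝔸 its mean instantaneous activity. Then: (a) for every α<0, liminf_{N→∞} φ^{(N)}(α/N) ≥ −Σ; (b) for every α < −(Σ + 4√(ρ(1−ρ)))/𝔸, limsup_{N→∞} φ^{(N)}(α/N) ≤ −Σ; consequently for α < −(Σ + 4√(ρ(1−ρ)))/𝔸 the limit exists and lim_{N→∞} φ^{(N)}(α/N) = −Σ. -/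
/-!
Write `f = g²` and let `μ = f ν`. For a negative parameter `α/N`, the variational functional is
minus `(1 - e^{α/N}) μ(𝓗) + e^{α/N} 𝒟_N(g)`, where `(1 - e^{α/N}) N → |α|`.

*Lower bound.* A trial density for `Σ_L`, carried by `{η_1 = 1}`, extends to any larger box by
filling all sites on its left (`extend`). These sites are frozen, so the Dirichlet form is unchanged
and `μ(𝓗) ≤ L` (`extend_spec`). Hence the liminf is at least `-Σ_L` for every `L`; the same extension
shows that `Σ_L` is nonincreasing (`SigmaOne_anti`), so that `Σ_L ≥ Σ`.

*Upper bound.* Two inequalities are combined. First, cutting `g` along `{η_x = 1}` costs at most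
`2 μ(c_x)` by reversibility (`dirichlet_cut`). The part carried by `{η_x = 1}` has Dirichlet form at
least `Σ μ(η_x)`, by restricting to the sites to the right of and including `x`. This gives
`𝒟_N(g) + 2 μ(c_x) ≥ Σ μ(η_x)` for every site `x` (`interface_site`), which is then averaged over `x`.
Second, symmetrising under the flip at `i` and using a weighted arithmetic-geometric inequality,
`(1 + θ) μ(c_i) + 𝒟_i / (4θ) ≥ 2ρ(1-ρ) μ(r_i)` for every `θ > 0` (`activity_site`), where `𝒟_i` is the
`i`-th Dirichlet term. Summed over `i`, with `Σ_i r_i ≥ Σ_x (1 - η_x)` (`sum_constr_ge`), it bounds the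
total activity from below by the mean number of empty sites, up to `𝒟_N(g) / (4θ)`, negligible after
division by `N`. If `|α| > Σ / (2ρ(1-ρ)) + 2`, the activity gained from empty sites pays for the
missing part of the interface energy, and `phi_upper` bounds `φ` by `-κ_N Σ` with `κ_N → 1`. The
threshold of the theorem is at least this one, since `𝔸 ≤ 2ρ(1-ρ)` and
`√(ρ(1-ρ)) ≥ ρ(1-ρ)` (`threshold`).
-/

open Finset Filter

open scoped Classical

/-! ### Weights, rates and reversibility -/

lemma occAt_mem {N : ℕ} (η : Config N) {bl br : ℝ} (hl : bl ∈ Set.Icc (0 : ℝ) 1)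
    (hr : br ∈ Set.Icc (0 : ℝ) 1) (k : ℕ) : occAt η bl br k ∈ Set.Icc (0 : ℝ) 1 := by
  unfold occAt
  split_ifs <;> simp_all

lemma occAt_flip {N : ℕ} (η : Config N) (bl br : ℝ) (i : Fin N) (k : ℕ) (hk : k ≠ i.1 + 1) :
    occAt (flipAt η i) bl br k = occAt η bl br k := by
  unfold occAt
  by_cases h1 : k = 0
  · simp [h1]
  by_cases h2 : k ≤ N
  swap
  · simp [h1, h2]
  have : (⟨k - 1, by omega⟩ : Fin N) ≠ i := by
    intro h
    have := congrArg Fin.val h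
    simp at this
    omega
  simp [h1, h2, flipAt, Function.update_of_ne this]

lemma flipAt_flipAt {N : ℕ} (η : Config N) (i : Fin N) : flipAt (flipAt η i) i = η := by
  simp [flipAt]

lemma flipAt_self {N : ℕ} (η : Config N) (i : Fin N) : flipAt η i i = !η i := by
  simp [flipAt]

lemma flipAt_ne {N : ℕ} (η : Config N) {i j : Fin N} (h : j ≠ i) : flipAt η i j = η j := by
  simp [flipAt, h]

lemma constr_flip (m : KCM) {N : ℕ} (η : Config N) (i : Fin N) :
    constr m (flipAt η i) i = constr m η i := by
  have h1 : i.1 + 2 ≠ i.1 + 1 := by omega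
  have h2 : i.1 ≠ i.1 + 1 := by omega
  cases m <;> simp only [constr] <;>
    simp only [occAt_flip η _ _ i _ h1, occAt_flip η _ _ i _ h2]

lemma constr_mem (m : KCM) {N : ℕ} (η : Config N) (i : Fin N) :
    constr m η i ∈ Set.Icc (0 : ℝ) 1 := by
  have key : ∀ a b : ℝ, a ∈ Set.Icc (0 : ℝ) 1 → b ∈ Set.Icc (0 : ℝ) 1 →
      1 - a * b ∈ Set.Icc (0 : ℝ) 1 := by
    rintro a b ⟨ha0, ha1⟩ ⟨hb0, hb1⟩
    constructor <;> nlinarith [mul_nonneg ha0 hb0]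
  have z : (0 : ℝ) ∈ Set.Icc (0 : ℝ) 1 := by simp
  have o : (1 : ℝ) ∈ Set.Icc (0 : ℝ) 1 := by simp
  cases m
  · have := key 1 _ o (occAt_mem η z z (i.1 + 2))
    simpa [constr] using this
  · exact key _ _ (occAt_mem η z z _) (occAt_mem η z z _)
  · exact key _ _ (occAt_mem η o z _) (occAt_mem η o z _)

lemma bern_pos {ρ : ℝ} (hρ0 : 0 < ρ) (hρ1 : ρ < 1) {N : ℕ} (η : Config N) : 0 < bern ρ η := by
  unfold bern
  refine Finset.prod_pos fun i _ => ?_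
  split_ifs <;> linarith

lemma crate_nonneg {ρ : ℝ} (hρ0 : 0 < ρ) (hρ1 : ρ < 1)
    (m : KCM) {N : ℕ} (η : Config N) (i : Fin N) : 0 ≤ crate m ρ η i := by
  unfold crate
  refine mul_nonneg (constr_mem m η i).1 ?_
  split_ifs <;> linarith

lemma crate_le_one {ρ : ℝ} (hρ0 : 0 < ρ) (hρ1 : ρ < 1)
    (m : KCM) {N : ℕ} (η : Config N) (i : Fin N) : crate m ρ η i ≤ 1 := by
  unfold crate
  refine mul_le_one₀ (constr_mem m η i).2 ?_ ?_ <;> split_ifs <;> linarith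

lemma expect_mono {ρ : ℝ} (hρ0 : 0 < ρ) (hρ1 : ρ < 1)
    {N : ℕ} {f g : Config N → ℝ} (h : ∀ η, f η ≤ g η) :
    expect ρ f ≤ expect ρ g :=
  Finset.sum_le_sum fun η _ => mul_le_mul_of_nonneg_left (h η) (bern_pos hρ0 hρ1 η).le

lemma expect_nonneg {ρ : ℝ} (hρ0 : 0 < ρ) (hρ1 : ρ < 1)
    {N : ℕ} {f : Config N → ℝ} (h : ∀ η, 0 ≤ f η) : 0 ≤ expect ρ f :=
  Finset.sum_nonneg fun η _ => mul_nonneg (bern_pos hρ0 hρ1 η).le (h η)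

lemma dirichlet_nonneg {ρ : ℝ} (hρ0 : 0 < ρ) (hρ1 : ρ < 1)
    (m : KCM) {N : ℕ} (g : Config N → ℝ) : 0 ≤ dirichlet m ρ g :=
  Finset.sum_nonneg fun i _ => expect_nonneg hρ0 hρ1 fun η =>
    mul_nonneg (crate_nonneg hρ0 hρ1 m η i) (sq_nonneg _)

lemma expect_add (ρ : ℝ) {N : ℕ} (f g : Config N → ℝ) :
    expect ρ (fun η => f η + g η) = expect ρ f + expect ρ g := by
  simp [_root_.expect, mul_add, Finset.sum_add_distrib]

lemma expect_smul (ρ : ℝ) {N : ℕ} (a : ℝ) (f : Config N → ℝ) :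
    expect ρ (fun η => a * f η) = a * expect ρ f := by
  simp only [_root_.expect, Finset.mul_sum]
  exact Finset.sum_congr rfl fun η _ => by ring

lemma expect_sum (ρ : ℝ) {N : ℕ} {ι : Type*} (s : Finset ι) (f : ι → Config N → ℝ) :
    expect ρ (fun η => ∑ i ∈ s, f i η) = ∑ i ∈ s, expect ρ (f i) := by
  simp only [_root_.expect, Finset.mul_sum]
  exact Finset.sum_comm

lemma expect_one (ρ : ℝ) (N : ℕ) : expect ρ (fun _ : Config N => (1 : ℝ)) = 1 := by
  have h := Fintype.prod_sum (fun (_ : Fin N) (b : Bool) => if b then ρ else 1 - ρ)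
  simp only [_root_.expect, mul_one, bern]
  rw [← h]
  simp

/-- Detailed balance: the product weight times the rate is the same at both ends of a flip. -/
lemma detailed_balance (m : KCM) (ρ : ℝ) {N : ℕ} (η : Config N) (i : Fin N) :
    bern ρ (flipAt η i) * crate m ρ (flipAt η i) i = bern ρ η * crate m ρ η i := by
  have h : ∀ ζ : Config N, bern ρ ζ = (if ζ i then ρ else 1 - ρ) *
      ∏ j ∈ Finset.univ.erase i, (if ζ j then ρ else 1 - ρ) := fun ζ =>
    (Finset.mul_prod_erase _ _ (Finset.mem_univ i)).symm
  have h2 : ∏ j ∈ Finset.univ.erase i, (if flipAt η i j then ρ else 1 - ρ) =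
      ∏ j ∈ Finset.univ.erase i, (if η j then ρ else 1 - ρ) :=
    Finset.prod_congr rfl fun j hj => by rw [flipAt_ne η (Finset.ne_of_mem_erase hj)]
  rw [h, h η, h2, crate, crate, constr_flip, flipAt_self]
  cases η i <;> simp <;> ring

/-- Reversibility of the dynamics with respect to the product measure. -/
lemma expect_flip (m : KCM) (ρ : ℝ) {N : ℕ} (i : Fin N) (F : Config N → ℝ) :
    expect ρ (fun η => crate m ρ η i * F (flipAt η i)) =
      expect ρ (fun η => crate m ρ η i * F η) := by
  unfold _root_.expect
  refine Fintype.sum_equiv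
    (Function.Involutive.toPerm (fun η => flipAt η i) fun η => flipAt_flipAt η i) _ _ fun η => ?_
  change bern ρ η * (crate m ρ η i * F (flipAt η i)) =
    bern ρ (flipAt η i) * (crate m ρ (flipAt η i) i * F (flipAt η i))
  rw [← mul_assoc, ← mul_assoc, detailed_balance]

/-! ### Local activity and cutting inequalities -/

/-- Local activity bound: up to a multiple of the single-site Dirichlet form, the mean rate at a
site is at least `2ρ(1-ρ)` times the mean constraint. This expresses that, where the constraint
holds and the local Dirichlet form is small, the occupation number is almost Bernoulli. -/
lemma activity_site {ρ : ℝ} (hρ0 : 0 < ρ) (hρ1 : ρ < 1) (m : KCM) {N : ℕ} (i : Fin N)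
    (g : Config N → ℝ) {θ : ℝ} (hθ : 0 < θ) :
    2 * ρ * (1 - ρ) * expect ρ (fun η => g η ^ 2 * constr m η i) ≤
      (1 + θ) * expect ρ (fun η => g η ^ 2 * crate m ρ η i) +
      (1 / (4 * θ)) * expect ρ (fun η => crate m ρ η i * (g (flipAt η i) - g η) ^ 2) := by
  -- `q η = ν(η_i = current value)`, so that `2ρ(1-ρ) r_i = 2 q c_i` and `q` sums to one on flips.
  set q : Config N → ℝ := fun η => if η i then ρ else 1 - ρ with hq
  set F : Config N → ℝ := fun η => (1 + θ) * g η ^ 2 - 2 * q η * g η ^ 2 with hF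
  have hqf : ∀ η, q (flipAt η i) = 1 - q η := fun η => by
    simp only [hq, flipAt_self]
    cases η i <;> simp
  have hq01 : ∀ η, 0 ≤ q η ∧ q η ≤ 1 := fun η => by
    simp only [hq]
    split_ifs <;> constructor <;> linarith
  have hsym := expect_flip m ρ i F
  have h0 : 0 ≤ expect ρ (fun η => crate m ρ η i * (F η + F (flipAt η i) +
      2 * (1 / (4 * θ)) * (g (flipAt η i) - g η) ^ 2)) := by
    refine expect_nonneg hρ0 hρ1 fun η => mul_nonneg (crate_nonneg hρ0 hρ1 m η i) ?_
    simp only [hF, hqf]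
    obtain ⟨h0, h1⟩ := hq01 η
    generalize q η = p at *
    generalize g (flipAt η i) = y
    generalize g η = x
    have key : 0 ≤ 2 * θ * ((1 + θ) * x ^ 2 - 2 * p * x ^ 2 +
        ((1 + θ) * y ^ 2 - 2 * (1 - p) * y ^ 2)) + (y - x) ^ 2 := by
      nlinarith [sq_nonneg ((y - x) - θ * (1 - 2 * p) * (x + y)), sq_nonneg (x + y),
        mul_nonneg h0 (sub_nonneg.2 h1), mul_nonneg (mul_nonneg h0 (sub_nonneg.2 h1))
          (mul_nonneg (sq_nonneg θ) (sq_nonneg (x + y))), mul_nonneg (sq_nonneg θ)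
          (sq_nonneg (x - y))]
    have : (1 + θ) * x ^ 2 - 2 * p * x ^ 2 + ((1 + θ) * y ^ 2 - 2 * (1 - p) * y ^ 2) +
        2 * (1 / (4 * θ)) * (y - x) ^ 2 = (2 * θ * ((1 + θ) * x ^ 2 - 2 * p * x ^ 2 +
        ((1 + θ) * y ^ 2 - 2 * (1 - p) * y ^ 2)) + (y - x) ^ 2) / (2 * θ) := by
      field_simp
      ring
    rw [this]
    positivity
  have h1 : expect ρ (fun η => crate m ρ η i * (F η + F (flipAt η i) +
      2 * (1 / (4 * θ)) * (g (flipAt η i) - g η) ^ 2)) =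
      expect ρ (fun η => crate m ρ η i * F η) + expect ρ (fun η => crate m ρ η i * F (flipAt η i)) +
      2 * (1 / (4 * θ)) * expect ρ (fun η => crate m ρ η i * (g (flipAt η i) - g η) ^ 2) := by
    rw [← expect_smul, ← expect_add, ← expect_add]
    congr 1; funext η; ring
  have h2 : expect ρ (fun η => crate m ρ η i * F η) +
      2 * ρ * (1 - ρ) * expect ρ (fun η => g η ^ 2 * constr m η i) =
      (1 + θ) * expect ρ (fun η => g η ^ 2 * crate m ρ η i) := by
    rw [← expect_smul, ← expect_smul, ← expect_add]
    congr 1; funext η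
    simp only [hF, hq, crate]
    split_ifs <;> ring
  linarith

/-- Restricting `g` to `{η_x = 1}` changes only the Dirichlet term at `x`; by reversibility the
new term is at most twice the mean rate at `x`. -/
lemma dirichlet_cut {ρ : ℝ} (hρ0 : 0 < ρ) (hρ1 : ρ < 1) (m : KCM) {N : ℕ} (x : Fin N)
    (g : Config N → ℝ) :
    dirichlet m ρ (fun η => g η * occ η x) ≤
      dirichlet m ρ g + 2 * expect ρ (fun η => g η ^ 2 * crate m ρ η x) := by
  unfold dirichlet
  rw [← Finset.add_sum_erase _ _ (Finset.mem_univ x),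
    ← Finset.add_sum_erase (Finset.univ) (fun i => expect ρ (fun η => crate m ρ η i *
      (g (flipAt η i) - g η) ^ 2)) (Finset.mem_univ x)]
  have h1 : ∑ i ∈ Finset.univ.erase x, expect ρ (fun η => crate m ρ η i *
      (g (flipAt η i) * occ (flipAt η i) x - g η * occ η x) ^ 2) ≤
      ∑ i ∈ Finset.univ.erase x, expect ρ (fun η => crate m ρ η i *
        (g (flipAt η i) - g η) ^ 2) := by
    refine Finset.sum_le_sum fun i hi => expect_mono hρ0 hρ1 fun η =>
      mul_le_mul_of_nonneg_left ?_ (crate_nonneg hρ0 hρ1 m η i)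
    have : occ (flipAt η i) x = occ η x := by
      simp only [occ, flipAt_ne η (Finset.ne_of_mem_erase hi).symm]
    rw [this]
    unfold occ
    split_ifs
    · simp
    · simp; positivity
  have h2 : expect ρ (fun η => crate m ρ η x *
      (g (flipAt η x) * occ (flipAt η x) x - g η * occ η x) ^ 2) ≤
      expect ρ (fun η => crate m ρ η x * (g (flipAt η x)) ^ 2) +
      expect ρ (fun η => crate m ρ η x * (g η) ^ 2) := by
    rw [← expect_add]
    refine expect_mono hρ0 hρ1 fun η => ?_
    rw [← mul_add]
    refine mul_le_mul_of_nonneg_left ?_ (crate_nonneg hρ0 hρ1 m η x)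
    simp only [occ, flipAt_self]
    cases η x <;> simp <;> positivity
  rw [expect_flip m ρ x (fun η => g η ^ 2)] at h2
  have h3 : expect ρ (fun η => crate m ρ η x * (g η) ^ 2) =
      expect ρ (fun η => g η ^ 2 * crate m ρ η x) := by
    congr 1; funext η; ring
  have h4 : 0 ≤ expect ρ (fun η => crate m ρ η x * (g (flipAt η x) - g η) ^ 2) :=
    expect_nonneg hρ0 hρ1 fun η => mul_nonneg (crate_nonneg hρ0 hρ1 m η x) (sq_nonneg _)
  linarith

/-- In the East and one-boundary FA-1f models, the constraints sum to at least the number of empty sites: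
the empty right boundary compensates for the first site. -/
lemma sum_constr_ge {m : KCM} (hm : m = KCM.east ∨ m = KCM.fa1) {N : ℕ} (η : Config N) :
    (N : ℝ) - ∑ x, occ η x ≤ ∑ i, constr m η i := by
  have z : (0 : ℝ) ∈ Set.Icc (0 : ℝ) 1 := by simp
  have o : (1 : ℝ) ∈ Set.Icc (0 : ℝ) 1 := by simp
  set u : ℕ → ℝ := fun k => 1 - occAt η 0 0 (k + 1) with hu
  have h1 : ∀ i : Fin N, u (i.1 + 1) ≤ constr m η i := by
    intro i
    rcases hm with rfl | rfl
    · exact le_rfl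
    · have ha := occAt_mem η o z i.1
      have hb := occAt_mem η o z (i.1 + 2)
      have he : occAt η 0 0 (i.1 + 2) = occAt η 1 0 (i.1 + 2) := by simp [occAt]
      simp only [hu, constr, he]
      nlinarith [ha.2, hb.1]
  have h2 : ∀ x : Fin N, 1 - occ η x = u x.1 := by
    intro x
    simp [hu, occAt, occ]
  have h3 : ∑ i : Fin N, u (i.1 + 1) + u 0 = ∑ x : Fin N, u x.1 + u N := by
    rw [Fin.sum_univ_eq_sum_range (fun k => u (k + 1)), Fin.sum_univ_eq_sum_range u,
      ← Finset.sum_range_succ', ← Finset.sum_range_succ]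
  have h4 : u 0 ≤ u N := by
    have := (occAt_mem η z z 1).1
    have hN : occAt η 0 0 (N + 1) = 0 := by simp [occAt]
    simp only [hu, hN, zero_add]
    linarith
  have h5 : ∑ x : Fin N, u x.1 = N - ∑ x, occ η x := by
    simp [← h2]
  have := Finset.sum_le_sum fun (i : Fin N) (_ : i ∈ Finset.univ) => h1 i
  linarith

/-! ### Splitting the box and the interface energy -/

lemma bern_append (ρ : ℝ) {k L : ℕ} (ζ : Config k) (η : Config L) :
    bern ρ (Fin.append ζ η : Config (k + L)) = bern ρ ζ * bern ρ η := by
  simp [bern, Fin.prod_univ_add]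

lemma expect_append (ρ : ℝ) {k L : ℕ} (F : Config (k + L) → ℝ) :
    expect ρ F = expect ρ (fun ζ : Config k => expect ρ (fun η : Config L =>
      F (Fin.append ζ η))) := by
  simp only [_root_.expect, Finset.mul_sum]
  rw [← (Fin.appendEquiv k L).sum_comp, Fintype.sum_prod_type]
  refine Finset.sum_congr rfl fun ζ _ => Finset.sum_congr rfl fun η _ => ?_
  rw [← mul_assoc, ← bern_append]
  rfl

lemma flipAt_append_natAdd {k L : ℕ} (ζ : Config k) (η : Config L) (i : Fin L) :
    flipAt (Fin.append ζ η : Config (k + L)) (Fin.natAdd k i) = Fin.append ζ (flipAt η i) := by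
  funext j
  refine Fin.addCases (fun j => ?_) (fun j => ?_) j
  · rw [flipAt_ne _ (by simp [Fin.ext_iff]; omega)]
    simp
  · by_cases h : j = i
    · subst h; simp [flipAt_self]
    · rw [flipAt_ne _ (by simpa [Fin.ext_iff] using h)]
      simp [flipAt_ne η h]

lemma flipAt_append_castAdd {k L : ℕ} (ζ : Config k) (η : Config L) (i : Fin k) :
    flipAt (Fin.append ζ η : Config (k + L)) (Fin.castAdd L i) = Fin.append (flipAt ζ i) η := by
  funext j
  refine Fin.addCases (fun j => ?_) (fun j => ?_) j
  · by_cases h : j = i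
    · subst h; simp [flipAt_self]
    · rw [flipAt_ne _ (by simpa [Fin.ext_iff] using h)]
      simp [flipAt_ne ζ h]
  · rw [flipAt_ne _ (by simp [Fin.ext_iff]; omega)]
    simp

lemma occAt_append_right {k L : ℕ} (ζ : Config k) (η : Config L) (bl bl' br : ℝ) {j : ℕ}
    (hj : j ≠ 0) :
    occAt (Fin.append ζ η : Config (k + L)) bl br (k + j) = occAt η bl' br j := by
  unfold occAt
  by_cases h : j ≤ L
  · have e : (⟨k + j - 1, by omega⟩ : Fin (k + L)) = Fin.natAdd k ⟨j - 1, by omega⟩ := by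
      ext; simp; omega
    have e' : Fin.append ζ η ⟨k + j - 1, by omega⟩ = η ⟨j - 1, by omega⟩ := by
      rw [e, Fin.append_right]
    simp only [dif_neg hj, dif_neg (show k + j ≠ 0 by omega), dif_pos h,
      dif_pos (show k + j ≤ k + L by omega), e']
  · simp [hj, h]

lemma occAt_append_left {k L : ℕ} (ζ : Config k) (η : Config L) (bl br br' : ℝ) {j : ℕ}
    (hj : j ≤ k) :
    occAt (Fin.append ζ η : Config (k + L)) bl br j = occAt ζ bl br' j := by
  unfold occAt
  by_cases h : j = 0
  · simp [h]
  · have e : (⟨j - 1, by omega⟩ : Fin (k + L)) = Fin.castAdd L ⟨j - 1, by omega⟩ := by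
      ext; simp
    have e' : Fin.append ζ η ⟨j - 1, by omega⟩ = ζ ⟨j - 1, by omega⟩ := by
      rw [e, Fin.append_left]
    simp only [dif_neg h, dif_pos hj, dif_pos (show j ≤ k + L by omega), e']

/-- Constraints in the right sub-box are weakest when the exterior on its left is filled. -/
lemma constr_append_ge {m : KCM} (hm : m = KCM.east ∨ m = KCM.fa1) {k L : ℕ} (ζ : Config k)
    (η : Config L) (i : Fin L) :
    constr m η i ≤ constr m (Fin.append ζ η : Config (k + L)) (Fin.natAdd k i) := by
  have z : (0 : ℝ) ∈ Set.Icc (0 : ℝ) 1 := by simp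
  have o : (1 : ℝ) ∈ Set.Icc (0 : ℝ) 1 := by simp
  have e : ∀ bl, occAt (Fin.append ζ η : Config (k + L)) bl 0 (k + i.1 + 2) =
      occAt η bl 0 (i.1 + 2) := fun bl => by
    rw [add_assoc]; exact occAt_append_right ζ η bl bl 0 (by omega)
  rcases hm with rfl | rfl
  · simp [constr, e]
  · simp only [constr, Fin.val_natAdd, e]
    have hb := occAt_mem η o z (i.1 + 2)
    have hc := occAt_mem (Fin.append ζ η : Config (k + L)) o z (k + i.1)
    by_cases h : i.1 = 0
    · have : occAt η 1 0 i.1 = 1 := by simp [occAt, h]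
      rw [this]
      nlinarith [hb.1, hc.2]
    · rw [occAt_append_right ζ η 1 1 0 h]

/-- With a filled configuration on the left, the right sub-box keeps its own constraints. -/
lemma constr_append_eq {m : KCM} (hm : m = KCM.east ∨ m = KCM.fa1) {k L : ℕ}
    (η : Config L) (i : Fin L) :
    constr m (Fin.append (fun _ => true) η : Config (k + L)) (Fin.natAdd k i) =
      constr m η i := by
  have e : ∀ bl, occAt (Fin.append (fun _ : Fin k => true) η : Config (k + L)) bl 0
      (k + i.1 + 2) = occAt η bl 0 (i.1 + 2) := fun bl => by
    rw [add_assoc]; exact occAt_append_right _ η bl bl 0 (by omega)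
  rcases hm with rfl | rfl
  · simp [constr, e]
  · simp only [constr, Fin.val_natAdd, e]
    by_cases h : i.1 = 0
    · have : occAt (Fin.append (fun _ : Fin k => true) η : Config (k + L)) 1 0 (k + 0) = 1 := by
        rw [occAt_append_left _ η 1 0 1 (by omega)]
        simp [occAt]
      rw [h, this]
      simp [occAt]
    · rw [occAt_append_right _ η 1 1 0 h]

/-- If the left part is filled and the first site of the right part is occupied, no site of the
left part can flip. -/
lemma constr_append_left {m : KCM} (hm : m = KCM.east ∨ m = KCM.fa1) {k L : ℕ}
    (η : Config L) (hη : occAt η 0 0 1 = 1) (i : Fin k) :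
    constr m (Fin.append (fun _ => true) η : Config (k + L)) (Fin.castAdd L i) = 0 := by
  have e : ∀ bl, occAt (Fin.append (fun _ : Fin k => true) η : Config (k + L)) bl 0
      (i.1 + 2) = 1 := fun bl => by
    by_cases h : i.1 + 2 ≤ k
    · rw [occAt_append_left _ η bl 0 1 h]
      simp [occAt]
    · rw [show i.1 + 2 = k + 1 by omega, occAt_append_right _ η bl 0 0 one_ne_zero, hη]
  have e' : occAt (Fin.append (fun _ : Fin k => true) η : Config (k + L)) 1 0 i.1 = 1 := by
    rw [occAt_append_left _ η 1 0 1 (by omega)]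
    simp [occAt]
  rcases hm with rfl | rfl
  · simp [constr, e]
  · simp [constr, e, e']

/-- The Dirichlet form of the whole box dominates the averaged one of its right sub-box. -/
lemma dirichlet_append_ge {ρ : ℝ} (hρ0 : 0 < ρ) (hρ1 : ρ < 1) {m : KCM}
    (hm : m = KCM.east ∨ m = KCM.fa1) {k L : ℕ} (g : Config (k + L) → ℝ) :
    expect ρ (fun ζ : Config k => dirichlet m ρ (fun η : Config L => g (Fin.append ζ η))) ≤
      dirichlet m ρ g := by
  unfold dirichlet
  rw [Fin.sum_univ_add, expect_sum]
  have h0 : 0 ≤ ∑ i : Fin k, expect ρ (fun η : Config (k + L) =>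
      crate m ρ η (Fin.castAdd L i) * (g (flipAt η (Fin.castAdd L i)) - g η) ^ 2) :=
    Finset.sum_nonneg fun i _ => expect_nonneg hρ0 hρ1 fun η =>
      mul_nonneg (crate_nonneg hρ0 hρ1 m η _) (sq_nonneg _)
  refine le_trans (Finset.sum_le_sum fun i _ => ?_) (le_add_of_nonneg_left h0)
  rw [expect_append]
  refine expect_mono hρ0 hρ1 fun ζ => expect_mono hρ0 hρ1 fun η => ?_
  rw [flipAt_append_natAdd]
  refine mul_le_mul_of_nonneg_right ?_ (sq_nonneg _)
  simp only [crate, Fin.append_right]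
  refine mul_le_mul_of_nonneg_right (constr_append_ge hm ζ η i) ?_
  split_ifs <;> linarith

lemma dirichlet_smul (m : KCM) (ρ : ℝ) {N : ℕ} (a : ℝ) (g : Config N → ℝ) :
    dirichlet m ρ (fun η => a * g η) = a ^ 2 * dirichlet m ρ g := by
  simp only [dirichlet, Finset.mul_sum]
  refine Finset.sum_congr rfl fun i _ => ?_
  rw [← expect_smul]
  congr 1; funext η; ring

/-- The set whose infimum is the interface energy. -/
def sigmaSet (m : KCM) (ρ : ℝ) (L : ℕ) : Set ℝ :=
  { x | ∃ f : Config L → ℝ, (∀ η, 0 ≤ f η) ∧ expect ρ f = 1 ∧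
    expect ρ (fun η => f η * occAt η 0 0 1) = 1 ∧
    x = dirichlet m ρ (fun η => Real.sqrt (f η)) }

lemma sigmaSet_bddBelow {ρ : ℝ} (hρ0 : 0 < ρ) (hρ1 : ρ < 1) (m : KCM) (L : ℕ) :
    BddBelow (sigmaSet m ρ L) := by
  refine ⟨0, ?_⟩
  rintro x ⟨f, -, -, -, rfl⟩
  exact dirichlet_nonneg hρ0 hρ1 m _

lemma SigmaOne_nonneg {ρ : ℝ} (hρ0 : 0 < ρ) (hρ1 : ρ < 1) (m : KCM) (L : ℕ) :
    0 ≤ SigmaOne m ρ L := by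
  refine Real.sInf_nonneg ?_
  rintro x ⟨f, -, -, -, rfl⟩
  exact dirichlet_nonneg hρ0 hρ1 m _

lemma occAt_one_of_pos {L : ℕ} (hL : 0 < L) (η : Config L) (bl br : ℝ) :
    occAt η bl br 1 = occ η ⟨0, hL⟩ := by
  have : 1 ≤ L := hL
  simp [occAt, occ, this]

/-- The normalised point mass at the filled configuration is admissible. -/
lemma sigmaSet_nonempty {ρ : ℝ} (hρ0 : 0 < ρ) (hρ1 : ρ < 1) (m : KCM) {L : ℕ} (hL : 0 < L) :
    (sigmaSet m ρ L).Nonempty := by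
  have hb := bern_pos hρ0 hρ1 (fun _ : Fin L => true)
  refine ⟨_, fun η => if η = fun _ => true then (bern ρ (fun _ : Fin L => true))⁻¹ else 0,
    fun η => ?_, ?_, ?_, rfl⟩
  · dsimp only
    split_ifs
    · exact inv_nonneg.2 hb.le
    · exact le_rfl
  · simp [_root_.expect, hb.ne']
  · unfold _root_.expect
    rw [Finset.sum_eq_single (fun _ => true) (fun η _ h => by simp [h]) (by simp)]
    simp [hb.ne', occAt_one_of_pos hL, occ]

/-- Homogeneous form of the variational principle for the interface energy. -/
lemma SigmaOne_mul_le {ρ : ℝ} (hρ0 : 0 < ρ) (hρ1 : ρ < 1) (m : KCM) {L : ℕ}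
    (h : Config L → ℝ) (hh : ∀ η, 0 ≤ h η) (hs : ∀ η, h η * occAt η 0 0 1 = h η) :
    SigmaOne m ρ L * expect ρ (fun η => h η ^ 2) ≤ dirichlet m ρ h := by
  set s := expect ρ (fun η => h η ^ 2) with hsdef
  have hs0 : 0 ≤ s := expect_nonneg hρ0 hρ1 fun η => sq_nonneg _
  rcases hs0.eq_or_lt with h0 | hpos
  · rw [← h0, mul_zero]
    exact dirichlet_nonneg hρ0 hρ1 m h
  have hmem : dirichlet m ρ (fun η => Real.sqrt (s⁻¹ * h η ^ 2)) ∈ sigmaSet m ρ L := by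
    refine ⟨fun η => s⁻¹ * h η ^ 2, fun η => by positivity, ?_, ?_, rfl⟩
    · rw [expect_smul]; exact inv_mul_cancel₀ hpos.ne'
    · have : (fun η => s⁻¹ * h η ^ 2 * occAt η 0 0 1) = fun η => s⁻¹ * h η ^ 2 := by
        funext η
        rw [pow_two, mul_assoc s⁻¹, mul_assoc (h η), hs]
      rw [this, expect_smul]; exact inv_mul_cancel₀ hpos.ne'
  have hle : SigmaOne m ρ L ≤ _ := csInf_le (sigmaSet_bddBelow hρ0 hρ1 m L) hmem
  have he : (fun η => Real.sqrt (s⁻¹ * h η ^ 2)) = fun η => Real.sqrt s⁻¹ * h η := by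
    funext η
    rw [Real.sqrt_mul (by positivity), Real.sqrt_sq (hh η)]
  rw [he, dirichlet_smul, Real.sq_sqrt (by positivity)] at hle
  calc SigmaOne m ρ L * s ≤ s⁻¹ * dirichlet m ρ h * s := by gcongr
    _ = dirichlet m ρ h := by field_simp

/-- The interface inequality at a site: the event `{η_x = 1}` costs the interface energy, up to
the mean rate at `x`. -/
lemma interface_site {ρ : ℝ} (hρ0 : 0 < ρ) (hρ1 : ρ < 1) {m : KCM}
    (hm : m = KCM.east ∨ m = KCM.fa1) {Sg : ℝ} (hS : ∀ L, 0 < L → Sg ≤ SigmaOne m ρ L)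
    {N : ℕ} (x : Fin N) (g : Config N → ℝ) (hg : ∀ η, 0 ≤ g η) :
    Sg * expect ρ (fun η => g η ^ 2 * occ η x) ≤
      dirichlet m ρ g + 2 * expect ρ (fun η => g η ^ 2 * crate m ρ η x) := by
  refine le_trans ?_ (dirichlet_cut hρ0 hρ1 m x g)
  have hocc : ∀ η : Config N, occ η x = 0 ∨ occ η x = 1 := fun η => by
    unfold occ; split_ifs <;> simp
  have e1 : (fun η => g η ^ 2 * occ η x) = fun η => (g η * occ η x) ^ 2 := by
    funext η
    rcases hocc η with h | h <;> rw [h] <;> ring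
  rw [e1]
  have hg' : ∀ η, 0 ≤ g η * occ η x := fun η => by
    rcases hocc η with h | h <;> simp [h, hg η]
  have hg'' : ∀ η, η x = false → g η * occ η x = 0 := fun η h => by simp [occ, h]
  obtain ⟨G, hG⟩ : ∃ G : Config N → ℝ, ∀ η, g η * occ η x = G η := ⟨_, fun _ => rfl⟩
  simp only [hG] at hg' hg'' ⊢
  clear hG e1 hocc
  obtain ⟨k, hk⟩ := x
  obtain ⟨L, rfl⟩ : ∃ L, N = k + L := ⟨N - k, by omega⟩
  have hL : 0 < L := by omega
  refine le_trans ?_ (dirichlet_append_ge hρ0 hρ1 hm _)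
  rw [expect_append, ← expect_smul]
  refine expect_mono hρ0 hρ1 fun ζ => ?_
  refine le_trans (mul_le_mul_of_nonneg_right (hS L hL)
    (expect_nonneg hρ0 hρ1 fun η => sq_nonneg _)) ?_
  refine SigmaOne_mul_le hρ0 hρ1 m (fun η => G (Fin.append ζ η)) (fun η => hg' _) fun η => ?_
  rw [occAt_one_of_pos hL]
  by_cases h : η ⟨0, hL⟩
  · simp [occ, h]
  · have : (Fin.append ζ η : Config (k + L)) ⟨k, hk⟩ = false := by
      have : (⟨k, hk⟩ : Fin (k + L)) = Fin.natAdd k ⟨0, hL⟩ := by ext; simp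
      rw [this, Fin.append_right]
      simpa using h
    simp [hg'' _ this]

/-! ### Extending a trial density by filled sites -/

/-- Density on the box of size `k + L` that freezes the `k` leftmost sites in the filled state
and uses `f` on the rest. -/
noncomputable def extend (ρ : ℝ) {k L : ℕ} (f : Config L → ℝ) (η : Config (k + L)) : ℝ :=
  if (fun i => η (Fin.castAdd L i)) = (fun _ : Fin k => true) then
    (bern ρ (fun _ : Fin k => true))⁻¹ * f (fun i => η (Fin.natAdd k i)) else 0

lemma extend_append (ρ : ℝ) {k L : ℕ} (f : Config L → ℝ) (ζ : Config k) (η : Config L) :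
    extend ρ f (Fin.append ζ η : Config (k + L)) =
      if ζ = (fun _ : Fin k => true) then (bern ρ (fun _ : Fin k => true))⁻¹ * f η else 0 := by
  simp [extend]

lemma expect_extend {ρ : ℝ} (hρ0 : 0 < ρ) (hρ1 : ρ < 1) {k L : ℕ} (f : Config L → ℝ)
    (F : Config (k + L) → ℝ) :
    expect ρ (fun η => extend ρ f η * F η) =
      expect ρ (fun η => f η * F (Fin.append (fun _ => true) η)) := by
  have hb := (bern_pos hρ0 hρ1 (fun _ : Fin k => true)).ne'
  rw [expect_append]
  simp only [extend_append]
  have : ∀ ζ : Config k, expect ρ (fun η : Config L =>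
      (if ζ = (fun _ : Fin k => true) then (bern ρ (fun _ : Fin k => true))⁻¹ * f η else 0) *
        F (Fin.append ζ η)) = if ζ = (fun _ : Fin k => true) then
        (bern ρ (fun _ : Fin k => true))⁻¹ *
          expect ρ (fun η => f η * F (Fin.append (fun _ => true) η)) else 0 := by
    intro ζ
    split_ifs with h
    · rw [← expect_smul, h]
      congr 1; funext η; ring
    · simp [_root_.expect]
  simp only [this]
  unfold _root_.expect
  simp [hb]

/-- A density carried by `{η_1 = 1}` vanishes outside of this event. -/
lemma occ_of_density {ρ : ℝ} (hρ0 : 0 < ρ) (hρ1 : ρ < 1) {L : ℕ} {f : Config L → ℝ}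
    (hf : ∀ η, 0 ≤ f η) (h1 : expect ρ f = 1)
    (h2 : expect ρ (fun η => f η * occAt η 0 0 1) = 1) (η : Config L) :
    f η = 0 ∨ occAt η 0 0 1 = 1 := by
  have z : (0 : ℝ) ∈ Set.Icc (0 : ℝ) 1 := by simp
  have h3 : ∑ η, bern ρ η * (f η * (1 - occAt η 0 0 1)) = 0 := by
    have : ∀ η, bern ρ η * (f η * (1 - occAt η 0 0 1)) =
        bern ρ η * f η - bern ρ η * (f η * occAt η 0 0 1) := fun η => by ring
    simp only [this, Finset.sum_sub_distrib]
    unfold _root_.expect at h1 h2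
    rw [h1, h2, sub_self]
  rw [Finset.sum_eq_zero_iff_of_nonneg fun η _ => mul_nonneg (bern_pos hρ0 hρ1 η).le
    (mul_nonneg (hf η) (sub_nonneg.2 (occAt_mem η z z 1).2))] at h3
  have := h3 η (Finset.mem_univ η)
  rcases mul_eq_zero.1 this with h | h
  · exact absurd h (bern_pos hρ0 hρ1 η).ne'
  · rcases mul_eq_zero.1 h with h | h
    · exact Or.inl h
    · right; linarith

/-- A trial density for the interface energy extends to any larger box with the same Dirichlet
form and with escape rate bounded by the size of the original box. -/
lemma extend_spec {ρ : ℝ} (hρ0 : 0 < ρ) (hρ1 : ρ < 1) {m : KCM}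
    (hm : m = KCM.east ∨ m = KCM.fa1) {k L : ℕ} {f : Config L → ℝ}
    (hf : ∀ η, 0 ≤ f η) (h1 : expect ρ f = 1)
    (h2 : expect ρ (fun η => f η * occAt η 0 0 1) = 1) :
    (∀ η : Config (k + L), 0 ≤ extend ρ f η) ∧
    expect ρ (fun η : Config (k + L) => extend ρ f η) = 1 ∧
    (0 < L → expect ρ (fun η : Config (k + L) => extend ρ f η * occAt η 0 0 1) = 1) ∧
    expect ρ (fun η : Config (k + L) => extend ρ f η * escRate m ρ η) ≤ L ∧
    dirichlet m ρ (fun η : Config (k + L) => Real.sqrt (extend ρ f η)) =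
      dirichlet m ρ (fun η => Real.sqrt (f η)) := by
  have hb := bern_pos hρ0 hρ1 (fun _ : Fin k => true)
  have hsupp := occ_of_density hρ0 hρ1 hf h1 h2
  refine ⟨fun η => ?_, ?_, fun hL => ?_, ?_, ?_⟩
  · unfold extend
    split_ifs
    · exact mul_nonneg (inv_nonneg.2 hb.le) (hf _)
    · exact le_rfl
  · have := expect_extend hρ0 hρ1 (k := k) f (fun _ => 1)
    simpa [h1] using this
  · rw [expect_extend hρ0 hρ1, ← h2]
    congr 1; funext η
    rcases Nat.eq_zero_or_pos k with rfl | hk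
    · congr 1
      exact occAt_append_right (k := 0) (fun _ => true) η 0 0 0 (j := 1) one_ne_zero
    · rcases hsupp η with h | h
      · simp [h]
      · rw [h, occAt_append_left _ η 0 0 0 (show 1 ≤ k from hk), occAt_one_of_pos hk]
        simp [occ]
  · rw [expect_extend hρ0 hρ1]
    have : ∀ η, f η * escRate m ρ (Fin.append (fun _ => true) η : Config (k + L)) ≤ L * f η := by
      intro η
      rcases hsupp η with h | h
      · simp [h]
      · rw [mul_comm]
        refine mul_le_mul_of_nonneg_right ?_ (hf η)
        unfold escRate
        rw [Fin.sum_univ_add]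
        have e : ∀ i : Fin k, crate m ρ (Fin.append (fun _ => true) η : Config (k + L))
            (Fin.castAdd L i) = 0 := fun i => by
          simp [crate, constr_append_left hm η h i]
        simp only [e, Finset.sum_const_zero, zero_add]
        calc _ ≤ ∑ i : Fin L, (1 : ℝ) :=
              Finset.sum_le_sum fun i _ => crate_le_one hρ0 hρ1 m _ _
          _ = L := by simp
    refine (expect_mono hρ0 hρ1 this).trans ?_
    rw [expect_smul, h1, mul_one]
  · unfold dirichlet
    rw [Fin.sum_univ_add]
    -- Left sites: neither endpoint of an allowed flip is in the support.
    have hl : ∀ i : Fin k, expect ρ (fun η : Config (k + L) => crate m ρ η (Fin.castAdd L i) *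
        (Real.sqrt (extend ρ f (flipAt η (Fin.castAdd L i))) - Real.sqrt (extend ρ f η)) ^ 2)
        = 0 := by
      intro i
      have key : ∀ η : Config (k + L), constr m η (Fin.castAdd L i) = 0 ∨ extend ρ f η = 0 := by
        intro η
        by_cases hη : (fun i => η (Fin.castAdd L i)) = (fun _ : Fin k => true)
        · have e : η = Fin.append (fun _ => true) (fun i => η (Fin.natAdd k i)) := by
            rw [← hη]
            exact (Fin.append_castAdd_natAdd (f := η)).symm
          rcases hsupp (fun i => η (Fin.natAdd k i)) with h | h
          · right; simp [extend, h]
          · left; rw [e]; exact constr_append_left hm _ h i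
        · right; simp [extend, hη]
      unfold _root_.expect
      refine Finset.sum_eq_zero fun η _ => ?_
      rcases key η with h | h
      · simp [crate, h]
      · rcases key (flipAt η (Fin.castAdd L i)) with h' | h'
        · rw [constr_flip] at h'
          simp [crate, h']
        · simp [h, h']
    simp only [hl, Finset.sum_const_zero, zero_add]
    refine Finset.sum_congr rfl fun i _ => ?_
    rw [expect_append]
    have : ∀ ζ : Config k, expect ρ (fun η : Config L =>
        crate m ρ (Fin.append ζ η : Config (k + L)) (Fin.natAdd k i) *
        (Real.sqrt (extend ρ f (flipAt (Fin.append ζ η : Config (k + L)) (Fin.natAdd k i))) -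
          Real.sqrt (extend ρ f (Fin.append ζ η : Config (k + L)))) ^ 2) =
        if ζ = (fun _ : Fin k => true) then (bern ρ (fun _ : Fin k => true))⁻¹ *
          expect ρ (fun η => crate m ρ η i *
            (Real.sqrt (f (flipAt η i)) - Real.sqrt (f η)) ^ 2) else 0 := by
      intro ζ
      split_ifs with h
      · rw [← expect_smul, h]
        congr 1; funext η
        rw [flipAt_append_natAdd, extend_append, extend_append, if_pos rfl, if_pos rfl,
          Real.sqrt_mul (inv_nonneg.2 hb.le), Real.sqrt_mul (inv_nonneg.2 hb.le),
          ← mul_sub, mul_pow, Real.sq_sqrt (inv_nonneg.2 hb.le)]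
        simp only [crate, constr_append_eq hm, Fin.append_right]
        ring
      · simp [flipAt_append_natAdd, extend_append, h, _root_.expect]
    simp only [this]
    generalize expect ρ (fun η => crate m ρ η i *
            (Real.sqrt (f (flipAt η i)) - Real.sqrt (f η)) ^ 2) = c
    simp [_root_.expect, hb.ne']

lemma SigmaOne_anti {ρ : ℝ} (hρ0 : 0 < ρ) (hρ1 : ρ < 1) {m : KCM}
    (hm : m = KCM.east ∨ m = KCM.fa1) (k : ℕ) {L : ℕ} (hL : 0 < L) :
    SigmaOne m ρ (k + L) ≤ SigmaOne m ρ L := by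
  refine le_csInf (sigmaSet_nonempty hρ0 hρ1 m hL) ?_
  rintro x ⟨f, hf, h1, h2, rfl⟩
  obtain ⟨e1, e2, e3, -, e5⟩ := extend_spec hρ0 hρ1 hm (k := k) hf h1 h2
  exact csInf_le (sigmaSet_bddBelow hρ0 hρ1 m (k + L)) ⟨_, e1, e2, e3 hL, e5.symm⟩

/-! ### Bounds at finite volume and passage to the limit -/

lemma phi_trial_nonpos {ρ : ℝ} (hρ0 : 0 < ρ) (hρ1 : ρ < 1) (m : KCM) {N : ℕ} {lam : ℝ}
    (hlam : lam ≤ 0) {f : Config N → ℝ} (hf : ∀ η, 0 ≤ f η) :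
    (Real.exp lam - 1) * expect ρ (fun η => f η * escRate m ρ η)
      - Real.exp lam * dirichlet m ρ (fun η => Real.sqrt (f η)) ≤ 0 := by
  have hexp : Real.exp lam ≤ 1 := Real.exp_le_one_iff.2 hlam
  have a1 : 0 ≤ expect ρ (fun η => f η * escRate m ρ η) :=
    expect_nonneg hρ0 hρ1 fun η => mul_nonneg (hf η)
      (Finset.sum_nonneg fun i _ => crate_nonneg hρ0 hρ1 m η i)
  have a2 := dirichlet_nonneg hρ0 hρ1 m (fun η => Real.sqrt (f η))
  nlinarith [mul_nonneg (Real.exp_pos lam).le a2, mul_nonneg (sub_nonneg.2 hexp) a1]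

/-- Lower bound in a box of size `N ≥ L` from a trial density on the box of size `L`. -/
lemma phi_lower {ρ : ℝ} (hρ0 : 0 < ρ) (hρ1 : ρ < 1) {m : KCM}
    (hm : m = KCM.east ∨ m = KCM.fa1) {L N : ℕ} (hLN : L ≤ N) {lam : ℝ} (hlam : lam ≤ 0)
    {D : ℝ} (hD : D ∈ sigmaSet m ρ L) : (Real.exp lam - 1) * L - D ≤ phi m ρ N lam := by
  have hexp : Real.exp lam ≤ 1 := Real.exp_le_one_iff.2 hlam
  have hD0 : 0 ≤ D := by
    obtain ⟨f, -, -, -, rfl⟩ := hD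
    exact dirichlet_nonneg hρ0 hρ1 m _
  obtain ⟨f, hf, h1, h2, rfl⟩ := hD
  obtain ⟨k, rfl⟩ : ∃ k, N = k + L := ⟨N - L, by omega⟩
  obtain ⟨e1, e2, -, e4, e5⟩ := extend_spec hρ0 hρ1 hm (k := k) hf h1 h2
  -- The supremum is bounded by `0`, so it is not a junk value.
  have hbdd : BddAbove { x | ∃ f : Config (k + L) → ℝ, (∀ η, 0 ≤ f η) ∧ expect ρ f = 1 ∧
      x = (Real.exp lam - 1) * expect ρ (fun η => f η * escRate m ρ η)
        - Real.exp lam * dirichlet m ρ (fun η => Real.sqrt (f η)) } := by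
    refine ⟨0, ?_⟩
    rintro x ⟨F, hF, -, rfl⟩
    exact phi_trial_nonpos hρ0 hρ1 m hlam hF
  refine le_trans ?_ (le_csSup hbdd ⟨_, e1, e2, rfl⟩)
  rw [e5]
  have b1 := mul_le_mul_of_nonneg_left e4 (sub_nonneg.2 hexp)
  have b2 := mul_nonneg (sub_nonneg.2 hexp) hD0
  linarith

/-- Upper bound in a finite box, from the interface inequality averaged over all sites and the
activity bound summed over all sites. -/
lemma phi_upper {ρ : ℝ} (hρ0 : 0 < ρ) (hρ1 : ρ < 1) {m : KCM}
    (hm : m = KCM.east ∨ m = KCM.fa1) {Sg : ℝ} (hS0 : 0 ≤ Sg)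
    (hS : ∀ L, 0 < L → Sg ≤ SigmaOne m ρ L) {N : ℕ} (hN : 0 < N) {lam : ℝ} (hlam : lam ≤ 0)
    {θ : ℝ} (hθ : 0 < θ)
    (hb : Sg / (2 * ρ * (1 - ρ)) * (1 + θ) + 2 ≤ (1 - Real.exp lam) * N)
    (hκ : 0 ≤ Real.exp lam - Sg / (2 * ρ * (1 - ρ)) / (4 * θ) / N) :
    phi m ρ N lam ≤ -((Real.exp lam - Sg / (2 * ρ * (1 - ρ)) / (4 * θ) / N) * Sg) := by
  have hexp : Real.exp lam ≤ 1 := Real.exp_le_one_iff.2 hlam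
  refine csSup_le ⟨_, fun _ => 1, fun _ => zero_le_one, expect_one ρ N, rfl⟩ ?_
  rintro x ⟨f, hf, hf1, rfl⟩
  set g : Config N → ℝ := fun η => Real.sqrt (f η) with hg
  have hfg : ∀ η, f η = g η ^ 2 := fun η => (Real.sq_sqrt (hf η)).symm
  have hN' : (0 : ℝ) < N := Nat.cast_pos.2 hN
  have hA : 0 < 2 * ρ * (1 - ρ) := by
    have := sub_pos.2 hρ1
    positivity
  set D := dirichlet m ρ g with hDdef
  have hD0 : 0 ≤ D := dirichlet_nonneg hρ0 hρ1 m g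
  set H := expect ρ (fun η => f η * escRate m ρ η) with hHdef
  set M := ∑ x : Fin N, expect ρ (fun η => g η ^ 2 * occ η x) with hMdef
  have hH : ∑ i, expect ρ (fun η => g η ^ 2 * crate m ρ η i) = H := by
    rw [← expect_sum, hHdef]
    congr 1; funext η
    rw [hfg, escRate, Finset.mul_sum]
  have hH0 : 0 ≤ H := expect_nonneg hρ0 hρ1 fun η => mul_nonneg (hf η)
        (Finset.sum_nonneg fun i _ => crate_nonneg hρ0 hρ1 m η i)
  have hMN : M ≤ N := by
    have : ∀ x : Fin N, expect ρ (fun η => g η ^ 2 * occ η x) ≤ 1 := by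
      intro x
      rw [← hf1]
      refine expect_mono hρ0 hρ1 fun η => ?_
      rw [hfg]
      unfold occ
      split_ifs
      · simp
      · simp [sq_nonneg]
    calc M ≤ ∑ x : Fin N, (1 : ℝ) := Finset.sum_le_sum fun x _ => this x
      _ = N := by simp
  have hI : Sg * M ≤ N * D + 2 * H := by
    have := Finset.sum_le_sum fun (x : Fin N) (_ : x ∈ Finset.univ) =>
      interface_site hρ0 hρ1 hm hS x g fun η => Real.sqrt_nonneg _
    rw [← Finset.mul_sum, Finset.sum_add_distrib, ← Finset.mul_sum, hH] at this
    simpa using this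
  have hAct : 2 * ρ * (1 - ρ) * (N - M) ≤ (1 + θ) * H + 1 / (4 * θ) * D := by
    have h1 := Finset.sum_le_sum fun (i : Fin N) (_ : i ∈ Finset.univ) =>
      activity_site hρ0 hρ1 m i g hθ
    rw [← Finset.mul_sum, Finset.sum_add_distrib, ← Finset.mul_sum, hH, ← Finset.mul_sum] at h1
    refine le_trans (mul_le_mul_of_nonneg_left ?_ hA.le) h1
    rw [← expect_sum]
    have h2 : (N : ℝ) = expect ρ (fun η => N * f η) := by rw [expect_smul, hf1, mul_one]
    have h3 : expect ρ (fun η => N * f η) =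
        expect ρ (fun η => g η ^ 2 * (N - ∑ x, occ η x)) + M := by
      rw [hMdef, ← expect_sum, ← expect_add]
      congr 1; funext η
      rw [← Finset.mul_sum, hfg]
      ring
    rw [h2, h3, add_sub_cancel_right]
    refine expect_mono hρ0 hρ1 fun η => ?_
    rw [← Finset.mul_sum]
    exact mul_le_mul_of_nonneg_left (sum_constr_ge hm η) (sq_nonneg _)
  -- Only elementary algebra in `D`, `H`, `M` remains.
  have hAct' : Sg * (N - M) ≤ Sg / (2 * ρ * (1 - ρ)) * (1 + θ) * H +
      Sg / (2 * ρ * (1 - ρ)) / (4 * θ) * D := by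
    have := mul_le_mul_of_nonneg_left hAct (div_nonneg hS0 hA.le)
    rw [← mul_assoc, div_mul_cancel₀ _ hA.ne'] at this
    refine this.trans (le_of_eq ?_)
    ring
  set c := Sg / (2 * ρ * (1 - ρ)) / (4 * θ) with hc
  have hc0 : 0 ≤ c := by positivity
  set κ := Real.exp lam - c / N with hκdef
  have hκ1 : κ ≤ 1 := by
    have : 0 ≤ c / N := by positivity
    linarith
  have hκN : Real.exp lam * N = κ * N + c := by
    rw [hκdef]; field_simp; ring
  have k1 := mul_le_mul_of_nonneg_right hb hH0
  have k2 := mul_le_mul_of_nonneg_left hI hκ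
  have k3 : 0 ≤ (1 - κ) * (Sg * (N - M)) :=
    mul_nonneg (sub_nonneg.2 hκ1) (mul_nonneg hS0 (sub_nonneg.2 hMN))
  have k4 : 0 ≤ (1 - κ) * H := mul_nonneg (sub_nonneg.2 hκ1) hH0
  have k5 : Real.exp lam * N * D = κ * N * D + c * D := by rw [hκN]; ring
  have k6 : N * (κ * Sg) ≤ N * ((1 - Real.exp lam) * H + Real.exp lam * D) := by
    nlinarith
  have := le_of_mul_le_mul_left k6 hN'
  linarith

/-- The activity threshold of the theorem implies the one required by `phi_upper`. -/
lemma threshold {ρ : ℝ} (hρ0 : 0 < ρ) (hρ1 : ρ < 1) (m : KCM) {Sg α : ℝ} (hS0 : 0 ≤ Sg)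
    (h : α < -(Sg + 4 * Real.sqrt (ρ * (1 - ρ))) / meanAct m ρ) :
    α < 0 ∧ Sg / (2 * ρ * (1 - ρ)) + 2 < -α := by
  have h1 := sub_pos.2 hρ1
  have ht : 0 < ρ * (1 - ρ) := mul_pos hρ0 h1
  have hsq : ρ * (1 - ρ) ≤ Real.sqrt (ρ * (1 - ρ)) :=
    Real.le_sqrt_of_sq_le (by
      have h2 : ρ * (1 - ρ) ≤ 1 := mul_le_one₀ hρ1.le h1.le (by linarith)
      rw [sq]
      exact mul_le_of_le_one_left ht.le h2)
  have hm : 0 < meanAct m ρ ∧ meanAct m ρ ≤ 2 * ρ * (1 - ρ) := by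
    have e : 0 < 1 - ρ ^ 2 := by nlinarith
    have e2 : 0 < ρ * (1 - ρ) * ρ := by positivity
    have e3 : 0 < ρ * (1 - ρ) * ρ ^ 2 := by positivity
    cases m <;> simp only [meanAct] <;> refine ⟨by positivity, ?_⟩ <;> nlinarith
  rw [lt_div_iff₀ hm.1] at h
  have hα : α < 0 := by
    by_contra hn
    have := mul_nonneg (not_lt.1 hn) hm.1.le
    linarith
  refine ⟨hα, ?_⟩
  have hA : 0 < 2 * ρ * (1 - ρ) := by positivity
  have h3 := mul_le_mul_of_nonneg_left hm.2 (neg_pos.2 hα).le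
  have h4 : Sg / (2 * ρ * (1 - ρ)) < -α - 2 := by
    rw [div_lt_iff₀ hA]
    linarith
  linarith

lemma tendsto_exp_div (α : ℝ) :
    Tendsto (fun N : ℕ => Real.exp (α / N)) atTop (nhds 1) := by
  have := (Real.continuous_exp.tendsto 0).comp (tendsto_const_div_atTop_nhds_zero_nat α)
  simpa [Function.comp_def] using this

lemma eventually_activity {α c : ℝ} (hc : c < -α) :
    ∀ᶠ N : ℕ in atTop, c ≤ (1 - Real.exp (α / N)) * N := by
  have h1 : ∀ᶠ N : ℕ in atTop, |α / N| ≤ 1 := by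
    have := (tendsto_const_div_atTop_nhds_zero_nat α).abs
    rw [abs_zero] at this
    exact this.eventually_le_const one_pos
  have h2 : ∀ᶠ N : ℕ in atTop, α ^ 2 / N ≤ -α - c :=
    (tendsto_const_div_atTop_nhds_zero_nat (α ^ 2)).eventually_le_const (by linarith)
  filter_upwards [h1, h2, eventually_gt_atTop 0] with N h1 h2 hN
  have hN' : (0 : ℝ) < N := Nat.cast_pos.2 hN
  have h3 := (abs_le.1 (Real.abs_exp_sub_one_sub_id_le h1)).2
  have h4 : (-(α / N) - (α / N) ^ 2) * N ≤ (1 - Real.exp (α / N)) * N :=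
    mul_le_mul_of_nonneg_right (by linarith) hN'.le
  have h5 : (-(α / N) - (α / N) ^ 2) * N = -α - α ^ 2 / N := by field_simp
  linarith

lemma eventually_phi_lower {ρ : ℝ} (hρ0 : 0 < ρ) (hρ1 : ρ < 1) {m : KCM}
    (hm : m = KCM.east ∨ m = KCM.fa1) {Sg : ℝ}
    (hSg : Tendsto (fun L : ℕ => SigmaOne m ρ L) atTop (nhds Sg)) {α : ℝ} (hα : α < 0)
    {a : ℝ} (ha : a < -Sg) : ∀ᶠ N : ℕ in atTop, a < phi m ρ N (α / N) := by
  obtain ⟨L, hL, hL0⟩ := ((hSg.eventually_lt_const (show Sg < -a by linarith)).and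
    (eventually_gt_atTop 0)).exists
  obtain ⟨D, hD, hDa⟩ := exists_lt_of_csInf_lt (sigmaSet_nonempty hρ0 hρ1 m hL0) hL
  have ht : Tendsto (fun N : ℕ => (Real.exp (α / N) - 1) * L - D) atTop (nhds (-D)) := by
    have := (((tendsto_exp_div α).sub_const 1).mul_const (L : ℝ)).sub_const D
    simpa using this
  filter_upwards [ht.eventually_const_lt (show a < -D by linarith), eventually_ge_atTop L]
    with N h1 h2
  exact h1.trans_le (phi_lower hρ0 hρ1 hm h2
    (div_nonpos_of_nonpos_of_nonneg hα.le (Nat.cast_nonneg N)) hD)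

lemma phi_nonpos {ρ : ℝ} (hρ0 : 0 < ρ) (hρ1 : ρ < 1) (m : KCM) {N : ℕ} {lam : ℝ}
    (hlam : lam ≤ 0) : phi m ρ N lam ≤ 0 := by
  refine Real.sSup_le ?_ le_rfl
  rintro x ⟨f, hf, -, rfl⟩
  exact phi_trial_nonpos hρ0 hρ1 m hlam hf

/-- **Theorem 2.1(ii) for East and FA-1f with one empty boundary** (Section 5.2).
For each of the two models, with `Σ = lim_L Σ_L` the one-boundary interface energy
and `𝔸` the mean instantaneous activity: (a) for every `α < 0`,
`liminf_N φ^{(N)}(α/N) ≥ −Σ`; (b) for every `α < −(Σ + 4√(ρ(1−ρ)))/𝔸`,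
`limsup_N φ^{(N)}(α/N) ≤ −Σ`; consequently for such `α` the limit exists and
equals `−Σ`. -/
theorem inactive_regime_east_fa1 (ρ : ℝ) (hρ0 : 0 < ρ) (hρ1 : ρ < 1) :
    ∀ m : KCM, m = KCM.east ∨ m = KCM.fa1 →
    ∀ Sg : ℝ, Filter.Tendsto (fun L : ℕ => SigmaOne m ρ L) Filter.atTop (nhds Sg) →
      (∀ α : ℝ, α < 0 →
        -Sg ≤ Filter.liminf (fun N : ℕ => phi m ρ N (α / N)) Filter.atTop) ∧
      (∀ α : ℝ, α < -(Sg + 4 * Real.sqrt (ρ * (1 - ρ))) / meanAct m ρ →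
        Filter.limsup (fun N : ℕ => phi m ρ N (α / N)) Filter.atTop ≤ -Sg ∧
        Filter.Tendsto (fun N : ℕ => phi m ρ N (α / N)) Filter.atTop (nhds (-Sg))) := by
  intro m hm Sg hSg
  have hS0 : 0 ≤ Sg := ge_of_tendsto' hSg fun L => SigmaOne_nonneg hρ0 hρ1 m L
  have hS : ∀ L, 0 < L → Sg ≤ SigmaOne m ρ L := fun L hL => by
    refine le_of_tendsto hSg ?_
    filter_upwards [eventually_ge_atTop L] with N hN
    obtain ⟨k, rfl⟩ : ∃ k, N = k + L := ⟨N - L, by omega⟩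
    exact SigmaOne_anti hρ0 hρ1 hm k hL
  refine ⟨fun α hα => ?_, fun α h => ?_⟩
  · -- `φ ≤ 0` makes the real-valued `liminf` meaningful.
    have hcob : Filter.IsCoboundedUnder (· ≥ ·) atTop (fun N : ℕ => phi m ρ N (α / N)) :=
      (Filter.isBoundedUnder_of ⟨0, fun N => phi_nonpos hρ0 hρ1 m
        (div_nonpos_of_nonpos_of_nonneg hα.le (Nat.cast_nonneg N))⟩).isCoboundedUnder_ge
    refine le_of_forall_lt fun a ha => ?_
    obtain ⟨b, hab, hb⟩ := exists_between ha
    refine hab.trans_le (Filter.le_liminf_of_le hcob ?_)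
    exact (eventually_phi_lower hρ0 hρ1 hm hSg hα hb).mono fun N h => h.le
  · obtain ⟨hα, hgap⟩ := threshold hρ0 hρ1 m hS0 h
    have hA : 0 < 2 * ρ * (1 - ρ) := mul_pos (by positivity) (sub_pos.2 hρ1)
    set s := Sg / (2 * ρ * (1 - ρ)) with hs
    have hs0 : 0 ≤ s := div_nonneg hS0 hA.le
    -- The strict inequality on `α` leaves room for a small `θ`.
    obtain ⟨θ, hθ, hθc⟩ : ∃ θ : ℝ, 0 < θ ∧ s * (1 + θ) + 2 < -α := by
      refine ⟨(-α - 2 - s) / (s + 1), div_pos (by linarith) (by linarith), ?_⟩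
      have h1 : s * ((-α - 2 - s) / (s + 1)) < -α - 2 - s := by
        rw [← mul_div_assoc, div_lt_iff₀ (by linarith)]
        nlinarith
      linarith
    have hκ : Tendsto (fun N : ℕ => Real.exp (α / N) - s / (4 * θ) / N) atTop (nhds 1) := by
      have := (tendsto_exp_div α).sub (tendsto_const_div_atTop_nhds_zero_nat (s / (4 * θ)))
      simpa using this
    have hup : ∀ᶠ N : ℕ in atTop,
        phi m ρ N (α / N) ≤ -((Real.exp (α / N) - s / (4 * θ) / N) * Sg) := by
      filter_upwards [eventually_activity hθc, hκ.eventually_const_le zero_lt_one,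
        eventually_gt_atTop 0] with N h1 h2 h3
      exact phi_upper hρ0 hρ1 hm hS0 hS h3
        (div_nonpos_of_nonpos_of_nonneg hα.le (Nat.cast_nonneg N)) hθ h1 h2
    have hlim : Tendsto (fun N : ℕ => -((Real.exp (α / N) - s / (4 * θ) / N) * Sg)) atTop
        (nhds (-Sg)) := by
      have := (hκ.mul_const Sg).neg
      simpa using this
    have ht : Tendsto (fun N : ℕ => phi m ρ N (α / N)) atTop (nhds (-Sg)) := by
      rw [tendsto_order]
      refine ⟨fun a ha => eventually_phi_lower hρ0 hρ1 hm hSg hα ha, fun a ha => ?_⟩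
      filter_upwards [hup, hlim.eventually_lt_const ha] with N h1 h2
      exact h1.trans_lt h2
    exact ⟨ht.limsup_eq.le, ht⟩
end
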